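/- Third new modulus-8 A_2 Rogers–Ramanujan identity: the quadruple sum over n_1,n_2,n_3,n_4 ≥ 0 of q^(n_1^2+n_2^2+n_3^2+n_4^2+n_3-n_1n_2+n_2n_4)/(q;q)_{n_1} · [n_1 choose n_2]_q [n_1 choose n_4]_q [n_2 choose n_3]_q equals 1/((q,q,q^3,q^3,q^5,q^5,q^7,q^7; q^8)_∞). -/

import Mathlib

/-!
# A modulus-8 `A₂` Rogers–Ramanujan identity

The identity is the limit `n → ∞` of a polynomial-type identity at each finite level `n`. Inserting
`1 / (t;t)_{n - n₁}` into the summand turns the quadruple sum into a finite sum `gSum`, with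
coefficients `la, lb, lc, ld` for the linear part of the exponent. The theorem concerns the
linear part `n₃`.

Seven linear combinations of such sums (`gProfiles`), indexed by the compositions of `5` into three
parts up to rotation, satisfy a closed linear system relating level `n` to level `n - 1`
(`Profiles.IsStep`). It is derived from contiguity relations, proved term by term, between quadruple
sums with neighbouring linear parts (`gProfiles_isStep`).

The alternating sum `aSum` runs over integer triples `m` of sum zero, with signs and quadratic
exponents, and with summand `1 / ∏ᵢ (t;t)_{nᵢ + mᵢ}`; its weights `d₁, d₂, d₃` enter the
exponent. Lowering one `nᵢ` moves a unit of weight between neighbouring `dᵢ`, rotation is a symmetry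
(`aSum_rotate`), and a reflection makes the sum vanish on the walls (`aSum_wall`). Hence the diagonal
sums `aDiag` with weights `dᵢ = cᵢ + 1`, for `c` a composition of `5`, solve the same system
(`aProfiles_isStep`).

Over Laurent series with `t = x` and `n ≥ 1` the system determines level `n` from level `n - 1`,
because the difference of two solutions is divisible by every power of `x`
(`Profiles.IsStep.unique`). Both families equal `1` at level `0`, so they agree; for the composition
`311` this says that the finite quadruple sum is `aDiag x n 4 2 2` (`gSum_eq_aDiag`).

Let `S` be the infinite quadruple sum. As `n → ∞`, `(q;q)_n` times the finite quadruple sum tends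
to `S`, and `(q;q)_n ^ 3 * aDiag` with `t = q` and weights `(4, 2, 2)` tends to a theta series. This
theta series does not change when `t = q` is replaced by `t = q²` and the weights by `(2, 1, 1)`; but
for these weights the alternating sum is simply `1 / (t;t)_n` (`aDiag_level_one`). Therefore
`(q;q)_∞ ^ 2 * S = (q²;q²)_∞ ^ 2` (`dvd_main`, as a congruence modulo each power of `q`), and
`(q;q)_∞ / (q²;q²)_∞` is the product of `1 - q ^ j` over odd `j`.
-/

open scoped Finset

noncomputable instance : TopologicalSpace (PowerSeries ℚ) :=
  Pi.topologicalSpace (ι := Unit →₀ ℕ) (Y := fun _ => ℚ)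

/-- The formal variable `q`. -/
noncomputable def q : PowerSeries ℚ := PowerSeries.X

/-- The q-Pochhammer symbol `(q;q)_n = ∏_{k=0}^{n-1} (1 - q·q^k)`. -/
noncomputable def qPoch (n : ℕ) : PowerSeries ℚ :=
  ∏ k ∈ Finset.range n, (1 - q ^ (k + 1))

/-- The Gaussian binomial coefficient `[m choose k]_q`, zero unless `k ≤ m`. -/
noncomputable def qBinom (m k : ℕ) : PowerSeries ℚ :=
  if k ≤ m then qPoch m * (qPoch k * qPoch (m - k))⁻¹ else 0

namespace A2Mod8

section Generic

variable {F : Type*} [Field F]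

/-- `t` is neither zero nor a root of unity, so that no factor `1 - t ^ j` with `j ≥ 1` vanishes. -/
structure IsGeneric (t : F) : Prop where
  ne_zero : t ≠ 0
  pow_ne_one : ∀ j : ℕ, t ^ (j + 1) ≠ 1

/-- The `q`-factorial `(t;t)_k`, with the value `0` for `k < 0`. -/
def V (t : F) (k : ℤ) : F :=
  if k < 0 then 0 else ∏ i ∈ Finset.range k.toNat, (1 - t ^ (i + 1))

/-- The reciprocal `1 / (t;t)_k`. For `k < 0` it is `0⁻¹ = 0`, which is the usual convention; every
summation range below is imposed by this vanishing. -/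
def U (t : F) (k : ℤ) : F := (V t k)⁻¹

variable {t : F}

lemma V_neg {k : ℤ} (hk : k < 0) : V t k = 0 := by simp [V, hk]

lemma U_neg {k : ℤ} (hk : k < 0) : U t k = 0 := by simp [U, V_neg hk]

lemma V_zero : V t 0 = 1 := by simp [V]

lemma U_zero : U t 0 = 1 := by simp [U, V_zero]

lemma V_natCast (n : ℕ) : V t n = ∏ i ∈ Finset.range n, (1 - t ^ (i + 1)) := by simp [V]

lemma V_rec {k : ℤ} (hk : k ≠ 0) : V t k = V t (k - 1) * (1 - t ^ k) := by
  rcases lt_or_gt_of_ne hk with h | h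
  · simp [V_neg h, V_neg (show k - 1 < 0 by omega)]
  · obtain ⟨n, rfl⟩ : ∃ n : ℕ, k = n + 1 := ⟨(k - 1).toNat, by omega⟩
    have : ((n : ℤ) + 1) = ((n + 1 : ℕ) : ℤ) := by push_cast; ring
    rw [add_sub_cancel_right, this, V_natCast, V_natCast, Finset.prod_range_succ, zpow_natCast]

lemma IsGeneric.V_ne_zero (ht : IsGeneric t) {k : ℤ} (hk : 0 ≤ k) : V t k ≠ 0 := by
  lift k to ℕ using hk
  rw [V_natCast, Finset.prod_ne_zero_iff]
  intro i _ h
  exact ht.pow_ne_one i (sub_eq_zero.mp h).symm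

/-- The factor `1 - t ^ k` lowers the index of `1 / (t;t)_k`. It holds for all integers `k`, with no
exception at `k = 0`. -/
lemma IsGeneric.U_rec (ht : IsGeneric t) (k : ℤ) : U t (k - 1) = U t k * (1 - t ^ k) := by
  rcases lt_or_ge k 1 with h | h
  · rw [U_neg (by omega : k - 1 < 0)]
    rcases lt_or_ge k 0 with h | h
    · simp [U_neg h]
    · simp [show k = 0 by omega]
  · have h1 := ht.V_ne_zero (by omega : 0 ≤ k)
    rw [U, U, V_rec (by omega : k ≠ 0)] at *
    have := left_ne_zero_of_mul h1
    have := right_ne_zero_of_mul h1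
    field_simp

/-! ### The quadruple sum at finite level -/

/-- The summand of the quadruple sum at level `n`, at the index `x = (n₁, n₂, n₃, n₄)`. The product
`1 / (t;t)_{n₁} * [n₁, n₂] * [n₁, n₄] * [n₂, n₃]` of a reciprocal factorial and three Gaussian
binomials simplifies to `V t n₁` times five of the `U` factors; the last factor `U t (n - n₁)`
makes the sum finite, and `la, lb, lc, ld` are the coefficients of the linear part of the
exponent. -/
def sumTerm (t : F) (n la lb lc ld : ℤ) (x : ℤ × ℤ × ℤ × ℤ) : F :=
  t ^ (x.1 ^ 2 + x.2.1 ^ 2 + x.2.2.1 ^ 2 + x.2.2.2 ^ 2 - x.1 * x.2.1 + x.2.1 * x.2.2.2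
      + (la * x.1 + lb * x.2.1 + lc * x.2.2.1 + ld * x.2.2.2))
    * (V t x.1 * U t (x.1 - x.2.1) * U t x.2.2.2 * U t (x.1 - x.2.2.2) * U t x.2.2.1
      * U t (x.2.1 - x.2.2.1) * U t (n - x.1))

/-- The quadruple sum at level `n`; its support is finite, see `sumTerm_support_finite`. -/
noncomputable def gSum (t : F) (n la lb lc ld : ℤ) : F := ∑ᶠ x, sumTerm t n la lb lc ld x

/-- Evaluation of a summand with its exponent and its seven indices in prescribed form. -/
lemma sumTerm_eq {n la lb lc ld : ℤ} {x : ℤ × ℤ × ℤ × ℤ} (E : ℤ) {i₁ i₂ i₃ i₄ i₅ i₆ i₇ : ℤ}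
    (hE : x.1 ^ 2 + x.2.1 ^ 2 + x.2.2.1 ^ 2 + x.2.2.2 ^ 2 - x.1 * x.2.1 + x.2.1 * x.2.2.2
      + (la * x.1 + lb * x.2.1 + lc * x.2.2.1 + ld * x.2.2.2) = E)
    (h₁ : x.1 = i₁) (h₂ : x.1 - x.2.1 = i₂) (h₃ : x.2.2.2 = i₃) (h₄ : x.1 - x.2.2.2 = i₄)
    (h₅ : x.2.2.1 = i₅) (h₆ : x.2.1 - x.2.2.1 = i₆) (h₇ : n - x.1 = i₇) :
    sumTerm t n la lb lc ld x
      = t ^ E * (V t i₁ * U t i₂ * U t i₃ * U t i₄ * U t i₅ * U t i₆ * U t i₇) := by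
  subst hE h₁ h₂ h₃ h₄ h₅ h₆ h₇; rfl

lemma sumTerm_eq_zero {n la lb lc ld a b c d : ℤ}
    (h : ¬ (0 ≤ c ∧ c ≤ b ∧ b ≤ a ∧ a ≤ n ∧ 0 ≤ d ∧ d ≤ a)) :
    sumTerm t n la lb lc ld (a, b, c, d) = 0 := by
  by_contra hne
  apply h
  simp only [sumTerm, mul_ne_zero_iff] at hne
  obtain ⟨-, ⟨⟨⟨⟨⟨-, h1⟩, h2⟩, h3⟩, h4⟩, h5⟩, h6⟩ := hne
  have key : ∀ {k : ℤ}, U t k ≠ 0 → 0 ≤ k := fun h => by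
    by_contra hk
    exact h (U_neg (by omega))
  have := key h1
  have := key h2
  have := key h3
  have := key h4
  have := key h5
  have := key h6
  omega

lemma sumTerm_support_finite (n la lb lc ld : ℤ) :
    (sumTerm t n la lb lc ld).HasFiniteSupport := by
  refine (Set.finite_Icc ((0, 0, 0, 0) : ℤ × ℤ × ℤ × ℤ) (n, n, n, n)).subset ?_
  rintro ⟨a, b, c, d⟩ hx
  by_contra hb
  refine hx (sumTerm_eq_zero fun h => hb ?_)
  simp only [Set.mem_Icc, Prod.mk_le_mk]
  omega

lemma gSum_zero (la lb lc ld : ℤ) : gSum t 0 la lb lc ld = 1 := by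
  rw [gSum, finsum_eq_single _ (0, 0, 0, 0)]
  · simp [sumTerm, V_zero, U_zero]
  · rintro ⟨a, b, c, d⟩ hx
    refine sumTerm_eq_zero fun h => hx ?_
    simp only [Prod.mk.injEq]
    omega

/-- A relation that holds between shifted summands at every index holds between the sums. -/
lemma gSum_relation {n₁ n₂ n₃ n₄ n₅ la₁ lb₁ lc₁ ld₁ la₂ lb₂ lc₂ ld₂ la₃ lb₃ lc₃ ld₃
    la₄ lb₄ lc₄ ld₄ la₅ lb₅ lc₅ ld₅ : ℤ} {k₃ k₄ k₅ : F} (s₃ s₄ s₅ : ℤ × ℤ × ℤ × ℤ)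
    (h : ∀ x, sumTerm t n₁ la₁ lb₁ lc₁ ld₁ x - sumTerm t n₂ la₂ lb₂ lc₂ ld₂ x
      = k₃ * sumTerm t n₃ la₃ lb₃ lc₃ ld₃ (x - s₃) + k₄ * sumTerm t n₄ la₄ lb₄ lc₄ ld₄ (x - s₄)
        + k₅ * sumTerm t n₅ la₅ lb₅ lc₅ ld₅ (x - s₅)) :
    gSum t n₁ la₁ lb₁ lc₁ ld₁ - gSum t n₂ la₂ lb₂ lc₂ ld₂
      = k₃ * gSum t n₃ la₃ lb₃ lc₃ ld₃ + k₄ * gSum t n₄ la₄ lb₄ lc₄ ld₄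
        + k₅ * gSum t n₅ la₅ lb₅ lc₅ ld₅ := by
  have shift : ∀ (n la lb lc ld : ℤ) (s : ℤ × ℤ × ℤ × ℤ), gSum t n la lb lc ld
      = ∑ᶠ x, sumTerm t n la lb lc ld (x - s) := fun n la lb lc ld s =>
    (finsum_comp_equiv (Equiv.subRight s)).symm
  have fin : ∀ (n la lb lc ld : ℤ) (s : ℤ × ℤ × ℤ × ℤ) (k : F),
      (fun x => k * sumTerm t n la lb lc ld (x - s)).HasFiniteSupport := by
    intro n la lb lc ld s k
    refine (((sumTerm_support_finite (t := t) n la lb lc ld).preimage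
      (sub_left_injective (b := s)).injOn)).subset fun x hx => ?_
    exact right_ne_zero_of_mul hx
  rw [shift n₃ la₃ lb₃ lc₃ ld₃ s₃, shift n₄ la₄ lb₄ lc₄ ld₄ s₄, shift n₅ la₅ lb₅ lc₅ ld₅ s₅,
    mul_finsum, mul_finsum, mul_finsum, ← finsum_add_distrib (fin ..) (fin ..),
    ← finsum_add_distrib ?_ (fin ..), gSum, gSum,
    ← finsum_sub_distrib (sumTerm_support_finite ..) (sumTerm_support_finite ..)]
  · exact finsum_congr h
  · exact ((fin ..).union (fin ..)).subset (Function.support_add _ _)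

/-! ### The system of `q`-difference equations -/

/-- A family of seven quantities, indexed by the compositions of `5` into three parts up to cyclic
rotation, each rotation class being represented by its name `pijk` (the reflections of `410` and
`320` are separate classes, named `401` and `302`). -/
structure Profiles (F : Type*) where
  p500 : F
  p410 : F
  p401 : F
  p320 : F
  p302 : F
  p311 : F
  p221 : F

/-- The system relating two consecutive levels. For a composition `c` the left-hand side is the sum
over the sets `J` of positions of nonzero parts of `(-y) ^ #J` times the entry at the composition
in which each position of `J` passes one unit to its cyclic successor. -/
structure Profiles.IsStep (y : F) (K K' : Profiles F) : Prop where
  e500 : K.p500 - y * K.p410 = K'.p500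
  e410 : K.p410 - y * (K.p320 + K.p401) + y ^ 2 * K.p311 = K'.p410
  e401 : K.p401 - y * (K.p311 + K.p500) + y ^ 2 * K.p410 = K'.p401
  e320 : K.p320 - y * (K.p302 + K.p311) + y ^ 2 * K.p221 = K'.p320
  e302 : K.p302 - y * (K.p221 + K.p401) + y ^ 2 * K.p311 = K'.p302
  e311 : K.p311 - y * (K.p221 + K.p302 + K.p410)
    + y ^ 2 * (K.p221 + K.p320 + K.p401) - y ^ 3 * K.p311 = K'.p311
  e221 : K.p221 - y * (K.p311 + K.p221 + K.p320)
    + y ^ 2 * (K.p221 + K.p302 + K.p311) - y ^ 3 * K.p221 = K'.p221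

/-- The solution of the system on the sum side. Entries `p320`, `p302` and `p401` are not single
quadruple sums but linear combinations of them. -/
noncomputable def gProfiles (t : F) (n : ℤ) : Profiles F where
  p500 := gSum t n 1 1 1 1
  p410 := gSum t n 0 1 1 1
  p401 := gSum t n (-1) 1 1 1 - (gSum t n 1 0 1 0 + gSum t n 0 1 0 1 - gSum t n 1 1 0 0)
    + t ^ n * gSum t n 0 0 1 0
  p320 := gSum t n 1 0 1 0 + gSum t n 0 1 0 1 - gSum t n 1 1 0 0
  p302 := gSum t n 1 0 0 0 + gSum t n 0 1 1 0 - gSum t n 1 0 1 0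
  p311 := gSum t n 0 0 1 0
  p221 := gSum t n 0 0 0 0

/-! ### Contiguity relations

Below, `(a, b, c, d)` is the summation index. In each relation the difference on the left carries,
term by term, one factor `1 - t ^ e` with `e` the index of one of the factors `U`.

* In `relC`, `relD`, `relB`, `relBC` this factor lowers the index of that `U`, and shifting one or
  two summation variables turns the result into a difference of two summands of the same level.
* In `relTad`, `relTab`, `relTbc`, `relTc` one also writes `V t a = V t (a - 1) * (1 - t ^ a)` and
  splits `1 - t ^ a` telescopically along `a`, for example as
  `(1 - t ^ (a - d)) + t ^ (a - d) * (1 - t ^ d)`. Each piece lowers the index of another `U`, and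
  shifting `a` leads to level `n - 1`. At `a = 0`, where the recursion of `V` fails, both sides
  vanish.
-/

section Relations

variable (ht : IsGeneric t)
include ht

/-- Lowering the level, by `U t (n - a - 1) = U t (n - a) * (1 - t ^ (n - a))`. -/
lemma relN (n la lb lc ld : ℤ) : gSum t (n - 1) (la + 1) lb lc ld
    = gSum t n (la + 1) lb lc ld - t ^ n * gSum t n la lb lc ld := by
  have := gSum_relation (t := t) (n₁ := n) (la₁ := la + 1) (lb₁ := lb) (lc₁ := lc) (ld₁ := ld)
    (n₂ := n - 1) (la₂ := la + 1) (lb₂ := lb) (lc₂ := lc) (ld₂ := ld)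
    (n₃ := n) (la₃ := la) (lb₃ := lb) (lc₃ := lc) (ld₃ := ld)
    (n₄ := n) (la₄ := la) (lb₄ := lb) (lc₄ := lc) (ld₄ := ld)
    (n₅ := n) (la₅ := la) (lb₅ := lb) (lc₅ := lc) (ld₅ := ld) (k₃ := t ^ n) (k₄ := 0) (k₅ := 0)
    0 0 0 ?_
  · linear_combination -this
  rintro ⟨a, b, c, d⟩
  set E := a ^ 2 + b ^ 2 + c ^ 2 + d ^ 2 - a * b + b * d + (la * a + lb * b + lc * c + ld * d)
    with hE
  simp only [sub_zero]
  rw [sumTerm_eq (n := n) (la := la + 1) (E + a) (by simp only [hE]; ring) rfl rfl rfl rfl rfl rfl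
      rfl,
    sumTerm_eq (n := n - 1) (E + a) (by simp only [hE]; ring) rfl rfl rfl rfl rfl rfl
      (show n - 1 - a = n - a - 1 by ring),
    sumTerm_eq (n := n) (la := la) E (by simp only [hE]) rfl rfl rfl rfl rfl rfl rfl,
    ht.U_rec, zpow_add₀ ht.ne_zero]
  have : t ^ n = t ^ (n - a) * t ^ a := by rw [← zpow_add₀ ht.ne_zero]; congr 1; ring
  rw [this]
  ring

/-- The contribution of `a = 0` to `relTad`: it forces `d = 0`. -/
lemma vanish_ad (d : ℤ) : U t d * U t (0 - d) * (1 - t ^ (0 - d)) = 0 := by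
  rw [mul_assoc, ← ht.U_rec]
  rcases lt_or_ge d 0 with h | h
  · rw [U_neg h, zero_mul]
  · rw [U_neg (by omega : 0 - d - 1 < 0), mul_zero]

omit ht in
/-- The contribution of `a = 0` to the other three relations of this kind: it forces
`b = c = 0`. -/
lemma vanish_abc (b c f : ℤ) (h : b = 0 → c = 0 → f = 0) :
    U t (0 - b) * U t c * U t (b - c) * (1 - t ^ f) = 0 := by
  rcases lt_or_ge c 0 with h₁ | h₁
  · rw [U_neg h₁]; ring
  rcases lt_or_ge (b - c) 0 with h₂ | h₂
  · rw [U_neg h₂]; ring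
  rcases lt_or_ge (0 - b) 0 with h₃ | h₃
  · rw [U_neg h₃]; ring
  rw [h (by omega) (by omega), zpow_zero, sub_self, mul_zero]

lemma relC (n la lb lc ld : ℤ) : gSum t n la lb lc ld - gSum t n la lb (lc + 1) ld
    = t ^ (lc + 1) * gSum t n la lb (lc + 2) ld - t ^ (lc + 1) * gSum t n la (lb + 1) (lc + 1)
      ld := by
  have := gSum_relation (t := t)
    (n₁ := n) (la₁ := la) (lb₁ := lb) (lc₁ := lc) (ld₁ := ld)
    (n₂ := n) (la₂ := la) (lb₂ := lb) (lc₂ := lc + 1) (ld₂ := ld)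
    (n₃ := n) (la₃ := la) (lb₃ := lb) (lc₃ := lc + 2) (ld₃ := ld) (k₃ := t ^ (lc + 1))
    (n₄ := n) (la₄ := la) (lb₄ := lb + 1) (lc₄ := lc + 1) (ld₄ := ld) (k₄ := -t ^ (lc + 1))
    (n₅ := n) (la₅ := la) (lb₅ := lb) (lc₅ := lc) (ld₅ := ld) (k₅ := 0)
    (0, 0, 1, 0) (0, 0, 1, 0) 0 ?_
  · linear_combination this
  rintro ⟨a, b, c, d⟩
  set E := a ^ 2 + b ^ 2 + c ^ 2 + d ^ 2 - a * b + b * d + (la * a + lb * b + lc * c + ld * d)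
    with hE
  rw [show ((a, b, c, d) - (0, 0, 1, 0) : ℤ × ℤ × ℤ × ℤ) = (a, b, c - 1, d) by simp]
  rw [sumTerm_eq (n := n) (la := la) (lb := lb) (lc := lc) (ld := ld) E (by simp only [hE]) rfl rfl
      rfl rfl rfl rfl rfl,
    sumTerm_eq (n := n) (la := la) (lb := lb) (lc := lc + 1) (ld := ld) (E + c)
      (by simp only [hE]; ring) rfl rfl rfl rfl rfl rfl rfl,
    sumTerm_eq (n := n) (la := la) (lb := lb) (lc := lc + 2) (ld := ld) (E - (lc + 1))
      (i₁ := a) (i₂ := a - b) (i₃ := d) (i₄ := a - d) (i₅ := c - 1) (i₆ := b - c + 1) (i₇ := n - a)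
      (by simp only [hE]; ring) (by ring) (by ring) (by ring) (by ring) (by ring) (by ring)
        (by ring),
    sumTerm_eq (n := n) (la := la) (lb := lb + 1) (lc := lc + 1) (ld := ld)
      (E + (b - c + 1) - (lc + 1))
      (i₁ := a) (i₂ := a - b) (i₃ := d) (i₄ := a - d) (i₅ := c - 1) (i₆ := b - c + 1) (i₇ := n - a)
      (by simp only [hE]; ring) (by ring) (by ring) (by ring) (by ring) (by ring) (by ring)
        (by ring),
    zpow_add₀ ht.ne_zero E]
  have k1 : t ^ (lc + 1) * t ^ (E - (lc + 1)) = t ^ E * t ^ (0 : ℤ) := by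
    rw [← zpow_add₀ ht.ne_zero, ← zpow_add₀ ht.ne_zero]; congr 1; ring
  have k2 : t ^ (lc + 1) * t ^ (E + (b - c + 1) - (lc + 1)) = t ^ E * t ^ (b - c + 1) := by
    rw [← zpow_add₀ ht.ne_zero, ← zpow_add₀ ht.ne_zero]; congr 1; ring
  rw [neg_mul, ← mul_assoc (t ^ _) (t ^ _), ← mul_assoc (t ^ _) (t ^ _), k1, k2, zpow_zero,
    ht.U_rec c,
    show U t (b - c) = U t (b - c + 1) * (1 - t ^ (b - c + 1)) by
      rw [← ht.U_rec]; congr 1; ring]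
  ring

lemma relD (n la lb lc ld : ℤ) : gSum t n la lb lc ld - gSum t n la lb lc (ld + 1)
    = t ^ (ld + 1) * gSum t n la (lb + 1) lc (ld + 2) - t ^ (ld + 1) * gSum t n (la + 1) (lb + 1)
      lc (ld + 1) := by
  have := gSum_relation (t := t)
    (n₁ := n) (la₁ := la) (lb₁ := lb) (lc₁ := lc) (ld₁ := ld)
    (n₂ := n) (la₂ := la) (lb₂ := lb) (lc₂ := lc) (ld₂ := ld + 1)
    (n₃ := n) (la₃ := la) (lb₃ := lb + 1) (lc₃ := lc) (ld₃ := ld + 2) (k₃ := t ^ (ld + 1))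
    (n₄ := n) (la₄ := la + 1) (lb₄ := lb + 1) (lc₄ := lc) (ld₄ := ld + 1) (k₄ := -t ^ (ld + 1))
    (n₅ := n) (la₅ := la) (lb₅ := lb) (lc₅ := lc) (ld₅ := ld) (k₅ := 0)
    (0, 0, 0, 1) (0, 0, 0, 1) 0 ?_
  · linear_combination this
  rintro ⟨a, b, c, d⟩
  set E := a ^ 2 + b ^ 2 + c ^ 2 + d ^ 2 - a * b + b * d + (la * a + lb * b + lc * c + ld * d)
    with hE
  rw [show ((a, b, c, d) - (0, 0, 0, 1) : ℤ × ℤ × ℤ × ℤ) = (a, b, c, d - 1) by simp]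
  rw [sumTerm_eq (n := n) (la := la) (lb := lb) (lc := lc) (ld := ld) E (by simp only [hE]) rfl rfl
      rfl rfl rfl rfl rfl,
    sumTerm_eq (n := n) (la := la) (lb := lb) (lc := lc) (ld := ld + 1) (E + d)
      (by simp only [hE]; ring) rfl rfl rfl rfl rfl rfl rfl,
    sumTerm_eq (n := n) (la := la) (lb := lb + 1) (lc := lc) (ld := ld + 2) (E - (ld + 1))
      (i₁ := a) (i₂ := a - b) (i₃ := d - 1) (i₄ := a - d + 1) (i₅ := c) (i₆ := b - c) (i₇ := n - a)
      (by simp only [hE]; ring) (by ring) (by ring) (by ring) (by ring) (by ring) (by ring)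
        (by ring),
    sumTerm_eq (n := n) (la := la + 1) (lb := lb + 1) (lc := lc) (ld := ld + 1)
      (E + (a - d + 1) - (ld + 1))
      (i₁ := a) (i₂ := a - b) (i₃ := d - 1) (i₄ := a - d + 1) (i₅ := c) (i₆ := b - c) (i₇ := n - a)
      (by simp only [hE]; ring) (by ring) (by ring) (by ring) (by ring) (by ring) (by ring)
        (by ring),
    zpow_add₀ ht.ne_zero E]
  have k1 : t ^ (ld + 1) * t ^ (E - (ld + 1)) = t ^ E * t ^ (0 : ℤ) := by
    rw [← zpow_add₀ ht.ne_zero, ← zpow_add₀ ht.ne_zero]; congr 1; ring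
  have k2 : t ^ (ld + 1) * t ^ (E + (a - d + 1) - (ld + 1)) = t ^ E * t ^ (a - d + 1) := by
    rw [← zpow_add₀ ht.ne_zero, ← zpow_add₀ ht.ne_zero]; congr 1; ring
  rw [neg_mul, ← mul_assoc (t ^ _) (t ^ _), ← mul_assoc (t ^ _) (t ^ _), k1, k2, zpow_zero,
    ht.U_rec d,
    show U t (a - d) = U t (a - d + 1) * (1 - t ^ (a - d + 1)) by
      rw [← ht.U_rec]; congr 1; ring]
  ring

lemma relB (n la lb lc ld : ℤ) : gSum t n la lb lc ld - gSum t n la (lb + 1) (lc - 1) ld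
    = t ^ (lb + 1) * gSum t n (la - 1) (lb + 2) lc (ld + 1) - t ^ (lb + 1) * gSum t n la (lb + 1)
      lc (ld + 1) := by
  have := gSum_relation (t := t)
    (n₁ := n) (la₁ := la) (lb₁ := lb) (lc₁ := lc) (ld₁ := ld)
    (n₂ := n) (la₂ := la) (lb₂ := lb + 1) (lc₂ := lc - 1) (ld₂ := ld)
    (n₃ := n) (la₃ := la - 1) (lb₃ := lb + 2) (lc₃ := lc) (ld₃ := ld + 1) (k₃ := t ^ (lb + 1))
    (n₄ := n) (la₄ := la) (lb₄ := lb + 1) (lc₄ := lc) (ld₄ := ld + 1) (k₄ := -t ^ (lb + 1))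
    (n₅ := n) (la₅ := la) (lb₅ := lb) (lc₅ := lc) (ld₅ := ld) (k₅ := 0)
    (0, 1, 0, 0) (0, 1, 0, 0) 0 ?_
  · linear_combination this
  rintro ⟨a, b, c, d⟩
  set E := a ^ 2 + b ^ 2 + c ^ 2 + d ^ 2 - a * b + b * d + (la * a + lb * b + lc * c + ld * d)
    with hE
  rw [show ((a, b, c, d) - (0, 1, 0, 0) : ℤ × ℤ × ℤ × ℤ) = (a, b - 1, c, d) by simp]
  rw [sumTerm_eq (n := n) (la := la) (lb := lb) (lc := lc) (ld := ld) E (by simp only [hE]) rfl rfl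
      rfl rfl rfl rfl rfl,
    sumTerm_eq (n := n) (la := la) (lb := lb + 1) (lc := lc - 1) (ld := ld) (E + (b - c))
      (by simp only [hE]; ring) rfl rfl rfl rfl rfl rfl rfl,
    sumTerm_eq (n := n) (la := la - 1) (lb := lb + 2) (lc := lc) (ld := ld + 1) (E - (lb + 1))
      (i₁ := a) (i₂ := a - b + 1) (i₃ := d) (i₄ := a - d) (i₅ := c) (i₆ := b - c - 1) (i₇ := n - a)
      (by simp only [hE]; ring) (by ring) (by ring) (by ring) (by ring) (by ring) (by ring)
        (by ring),
    sumTerm_eq (n := n) (la := la) (lb := lb + 1) (lc := lc) (ld := ld + 1)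
      (E + (a - b + 1) - (lb + 1))
      (i₁ := a) (i₂ := a - b + 1) (i₃ := d) (i₄ := a - d) (i₅ := c) (i₆ := b - c - 1) (i₇ := n - a)
      (by simp only [hE]; ring) (by ring) (by ring) (by ring) (by ring) (by ring) (by ring)
        (by ring),
    zpow_add₀ ht.ne_zero E]
  have k1 : t ^ (lb + 1) * t ^ (E - (lb + 1)) = t ^ E * t ^ (0 : ℤ) := by
    rw [← zpow_add₀ ht.ne_zero, ← zpow_add₀ ht.ne_zero]; congr 1; ring
  have k2 : t ^ (lb + 1) * t ^ (E + (a - b + 1) - (lb + 1)) = t ^ E * t ^ (a - b + 1) := by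
    rw [← zpow_add₀ ht.ne_zero, ← zpow_add₀ ht.ne_zero]; congr 1; ring
  rw [neg_mul, ← mul_assoc (t ^ _) (t ^ _), ← mul_assoc (t ^ _) (t ^ _), k1, k2, zpow_zero,
    show U t (a - b) = U t (a - b + 1) * (1 - t ^ (a - b + 1)) by
      rw [← ht.U_rec]; congr 1; ring,
    ht.U_rec (b - c)]
  ring

lemma relBC (n la lb lc ld : ℤ) : gSum t n la lb lc ld - gSum t n la lb (lc + 1) ld
    = t ^ (lb + lc + 2) * gSum t n (la - 1) (lb + 2) (lc + 2) (ld + 1) - t ^ (lb + lc + 2) * gSum t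
      n la (lb + 1) (lc + 2) (ld + 1) := by
  have := gSum_relation (t := t)
    (n₁ := n) (la₁ := la) (lb₁ := lb) (lc₁ := lc) (ld₁ := ld)
    (n₂ := n) (la₂ := la) (lb₂ := lb) (lc₂ := lc + 1) (ld₂ := ld)
    (n₃ := n) (la₃ := la - 1) (lb₃ := lb + 2) (lc₃ := lc + 2) (ld₃ := ld + 1)
      (k₃ := t ^ (lb + lc + 2))
    (n₄ := n) (la₄ := la) (lb₄ := lb + 1) (lc₄ := lc + 2) (ld₄ := ld + 1) (k₄ := -t ^ (lb + lc + 2))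
    (n₅ := n) (la₅ := la) (lb₅ := lb) (lc₅ := lc) (ld₅ := ld) (k₅ := 0)
    (0, 1, 1, 0) (0, 1, 1, 0) 0 ?_
  · linear_combination this
  rintro ⟨a, b, c, d⟩
  set E := a ^ 2 + b ^ 2 + c ^ 2 + d ^ 2 - a * b + b * d + (la * a + lb * b + lc * c + ld * d)
    with hE
  rw [show ((a, b, c, d) - (0, 1, 1, 0) : ℤ × ℤ × ℤ × ℤ) = (a, b - 1, c - 1, d) by simp]
  rw [sumTerm_eq (n := n) (la := la) (lb := lb) (lc := lc) (ld := ld) E (by simp only [hE]) rfl rfl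
      rfl rfl rfl rfl rfl,
    sumTerm_eq (n := n) (la := la) (lb := lb) (lc := lc + 1) (ld := ld) (E + c)
      (by simp only [hE]; ring) rfl rfl rfl rfl rfl rfl rfl,
    sumTerm_eq (n := n) (la := la - 1) (lb := lb + 2) (lc := lc + 2) (ld := ld + 1)
      (E - (lb + lc + 2))
      (i₁ := a) (i₂ := a - b + 1) (i₃ := d) (i₄ := a - d) (i₅ := c - 1) (i₆ := b - c) (i₇ := n - a)
      (by simp only [hE]; ring) (by ring) (by ring) (by ring) (by ring) (by ring) (by ring)
        (by ring),
    sumTerm_eq (n := n) (la := la) (lb := lb + 1) (lc := lc + 2) (ld := ld + 1)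
      (E + (a - b + 1) - (lb + lc + 2))
      (i₁ := a) (i₂ := a - b + 1) (i₃ := d) (i₄ := a - d) (i₅ := c - 1) (i₆ := b - c) (i₇ := n - a)
      (by simp only [hE]; ring) (by ring) (by ring) (by ring) (by ring) (by ring) (by ring)
        (by ring),
    zpow_add₀ ht.ne_zero E]
  have k1 : t ^ (lb + lc + 2) * t ^ (E - (lb + lc + 2)) = t ^ E * t ^ (0 : ℤ) := by
    rw [← zpow_add₀ ht.ne_zero, ← zpow_add₀ ht.ne_zero]; congr 1; ring
  have k2 : t ^ (lb + lc + 2) * t ^ (E + (a - b + 1) - (lb + lc + 2)) = t ^ E * t ^ (a - b + 1) :=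
    by
    rw [← zpow_add₀ ht.ne_zero, ← zpow_add₀ ht.ne_zero]; congr 1; ring
  rw [neg_mul, ← mul_assoc (t ^ _) (t ^ _), ← mul_assoc (t ^ _) (t ^ _), k1, k2, zpow_zero,
    show U t (a - b) = U t (a - b + 1) * (1 - t ^ (a - b + 1)) by
      rw [← ht.U_rec]; congr 1; ring,
    ht.U_rec c]
  ring

lemma relTad (n la lb lc ld : ℤ) : gSum t n la lb lc ld - gSum t n (la + 1) lb lc (ld - 1)
    = t ^ (la + 1) * gSum t (n - 1) (la + 2) (lb - 1) lc ld + t ^ (la + lb + 1) * gSum t (n - 1)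
      (la + 2) lb lc (ld + 1) + t ^ (la + lb + lc + 2) * gSum t (n - 1) (la + 2) (lb + 1) (lc + 1)
        (ld + 1) := by
  have := gSum_relation (t := t)
    (n₁ := n) (la₁ := la) (lb₁ := lb) (lc₁ := lc) (ld₁ := ld)
    (n₂ := n) (la₂ := la + 1) (lb₂ := lb) (lc₂ := lc) (ld₂ := ld - 1)
    (n₃ := n - 1) (la₃ := la + 2) (lb₃ := lb - 1) (lc₃ := lc) (ld₃ := ld) (k₃ := t ^ (la + 1))
    (n₄ := n - 1) (la₄ := la + 2) (lb₄ := lb) (lc₄ := lc) (ld₄ := ld + 1) (k₄ := t ^ (la + lb + 1))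
    (n₅ := n - 1) (la₅ := la + 2) (lb₅ := lb + 1) (lc₅ := lc + 1) (ld₅ := ld + 1)
      (k₅ := t ^ (la + lb + lc + 2))
    (1, 0, 0, 0) (1, 1, 0, 0) (1, 1, 1, 0) ?_
  · linear_combination this
  rintro ⟨a, b, c, d⟩
  set E := a ^ 2 + b ^ 2 + c ^ 2 + d ^ 2 - a * b + b * d + (la * a + lb * b + lc * c + ld * d)
    with hE
  rw [show ((a, b, c, d) - (1, 0, 0, 0) : ℤ × ℤ × ℤ × ℤ) = (a - 1, b, c, d) by simp]
  rw [show ((a, b, c, d) - (1, 1, 0, 0) : ℤ × ℤ × ℤ × ℤ) = (a - 1, b - 1, c, d) by simp]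
  rw [show ((a, b, c, d) - (1, 1, 1, 0) : ℤ × ℤ × ℤ × ℤ) = (a - 1, b - 1, c - 1, d) by simp]
  rw [sumTerm_eq (n := n) (la := la) (lb := lb) (lc := lc) (ld := ld) E (by simp only [hE]) rfl rfl
      rfl rfl rfl rfl rfl,
    sumTerm_eq (n := n) (la := la + 1) (lb := lb) (lc := lc) (ld := ld - 1) (E + (a - d))
      (by simp only [hE]; ring) rfl rfl rfl rfl rfl rfl rfl,
    sumTerm_eq (n := n - 1) (la := la + 2) (lb := lb - 1) (lc := lc) (ld := ld) (E - (la + 1))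
      (i₁ := a - 1) (i₂ := a - b - 1) (i₃ := d) (i₄ := a - d - 1) (i₅ := c) (i₆ := b - c)
        (i₇ := n - a)
      (by simp only [hE]; ring) (by ring) (by ring) (by ring) (by ring) (by ring) (by ring)
        (by ring),
    sumTerm_eq (n := n - 1) (la := la + 2) (lb := lb) (lc := lc) (ld := ld + 1)
      (E + (a - b) - (la + lb + 1))
      (i₁ := a - 1) (i₂ := a - b) (i₃ := d) (i₄ := a - d - 1) (i₅ := c) (i₆ := b - c - 1)
        (i₇ := n - a)
      (by simp only [hE]; ring) (by ring) (by ring) (by ring) (by ring) (by ring) (by ring)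
        (by ring),
    sumTerm_eq (n := n - 1) (la := la + 2) (lb := lb + 1) (lc := lc + 1) (ld := ld + 1)
      (E + (a - c) - (la + lb + lc + 2))
      (i₁ := a - 1) (i₂ := a - b) (i₃ := d) (i₄ := a - d - 1) (i₅ := c - 1) (i₆ := b - c)
        (i₇ := n - a)
      (by simp only [hE]; ring) (by ring) (by ring) (by ring) (by ring) (by ring) (by ring)
        (by ring),
    zpow_add₀ ht.ne_zero E]
  have k1 : t ^ (la + 1) * t ^ (E - (la + 1)) = t ^ E * t ^ (0 : ℤ) := by
    rw [← zpow_add₀ ht.ne_zero, ← zpow_add₀ ht.ne_zero]; congr 1; ring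
  have k2 : t ^ (la + lb + 1) * t ^ (E + (a - b) - (la + lb + 1)) = t ^ E * t ^ (a - b) := by
    rw [← zpow_add₀ ht.ne_zero, ← zpow_add₀ ht.ne_zero]; congr 1; ring
  have k3 : t ^ (la + lb + lc + 2) * t ^ (E + (a - c) - (la + lb + lc + 2)) = t ^ E * t ^ (a
    - c) := by
    rw [← zpow_add₀ ht.ne_zero, ← zpow_add₀ ht.ne_zero]; congr 1; ring
  have hs : t ^ a = t ^ (a - b) * t ^ (b - c) * t ^ c := by
    rw [← zpow_add₀ ht.ne_zero, ← zpow_add₀ ht.ne_zero]; congr 1; ring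
  have hs' : t ^ (a - c) = t ^ (a - b) * t ^ (b - c) := by
    rw [← zpow_add₀ ht.ne_zero]; congr 1; ring
  have hV : V t a * (U t d * U t (a - d) * (1 - t ^ (a - d)))
      = V t (a - 1) * (1 - t ^ a) * (U t d * U t (a - d) * (1 - t ^ (a - d))) := by
    rcases eq_or_ne a 0 with rfl | ha
    · rw [vanish_ad ht d]; ring
    · rw [← V_rec ha]
  rw [← mul_assoc (t ^ (la + 1)), k1, ← mul_assoc (t ^ (la + lb + 1)), k2, ← mul_assoc
      (t ^ (la + lb + lc + 2)), k3, zpow_zero]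
  simp only [ht.U_rec (a - b), ht.U_rec (a - d), ht.U_rec c, ht.U_rec (b - c)]
  rw [hs] at hV
  rw [hs']
  linear_combination (t ^ E * U t (a - b) * U t c * U t (b - c) * U t (n - a)) * hV

lemma relTab (n la lb lc ld : ℤ) : gSum t n la lb lc ld - gSum t n (la + 1) (lb - 1) lc ld
    = t ^ (la + 1) * gSum t (n - 1) (la + 2) (lb - 1) lc ld + t ^ (la + ld + 2) * gSum t (n - 1)
      (la + 3) lb lc (ld + 1) := by
  have := gSum_relation (t := t)
    (n₁ := n) (la₁ := la) (lb₁ := lb) (lc₁ := lc) (ld₁ := ld)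
    (n₂ := n) (la₂ := la + 1) (lb₂ := lb - 1) (lc₂ := lc) (ld₂ := ld)
    (n₃ := n - 1) (la₃ := la + 2) (lb₃ := lb - 1) (lc₃ := lc) (ld₃ := ld) (k₃ := t ^ (la + 1))
    (n₄ := n - 1) (la₄ := la + 3) (lb₄ := lb) (lc₄ := lc) (ld₄ := ld + 1) (k₄ := t ^ (la + ld + 2))
    (n₅ := n) (la₅ := la) (lb₅ := lb) (lc₅ := lc) (ld₅ := ld) (k₅ := 0)
    (1, 0, 0, 0) (1, 0, 0, 1) 0 ?_
  · linear_combination this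
  rintro ⟨a, b, c, d⟩
  set E := a ^ 2 + b ^ 2 + c ^ 2 + d ^ 2 - a * b + b * d + (la * a + lb * b + lc * c + ld * d)
    with hE
  rw [show ((a, b, c, d) - (1, 0, 0, 0) : ℤ × ℤ × ℤ × ℤ) = (a - 1, b, c, d) by simp]
  rw [show ((a, b, c, d) - (1, 0, 0, 1) : ℤ × ℤ × ℤ × ℤ) = (a - 1, b, c, d - 1) by simp]
  rw [sumTerm_eq (n := n) (la := la) (lb := lb) (lc := lc) (ld := ld) E (by simp only [hE]) rfl rfl
      rfl rfl rfl rfl rfl,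
    sumTerm_eq (n := n) (la := la + 1) (lb := lb - 1) (lc := lc) (ld := ld) (E + (a - b))
      (by simp only [hE]; ring) rfl rfl rfl rfl rfl rfl rfl,
    sumTerm_eq (n := n - 1) (la := la + 2) (lb := lb - 1) (lc := lc) (ld := ld) (E - (la + 1))
      (i₁ := a - 1) (i₂ := a - b - 1) (i₃ := d) (i₄ := a - d - 1) (i₅ := c) (i₆ := b - c)
        (i₇ := n - a)
      (by simp only [hE]; ring) (by ring) (by ring) (by ring) (by ring) (by ring) (by ring)
        (by ring),
    sumTerm_eq (n := n - 1) (la := la + 3) (lb := lb) (lc := lc) (ld := ld + 1)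
      (E + (a - d) - (la + ld + 2))
      (i₁ := a - 1) (i₂ := a - b - 1) (i₃ := d - 1) (i₄ := a - d) (i₅ := c) (i₆ := b - c)
        (i₇ := n - a)
      (by simp only [hE]; ring) (by ring) (by ring) (by ring) (by ring) (by ring) (by ring)
        (by ring),
    zpow_add₀ ht.ne_zero E]
  have k1 : t ^ (la + 1) * t ^ (E - (la + 1)) = t ^ E * t ^ (0 : ℤ) := by
    rw [← zpow_add₀ ht.ne_zero, ← zpow_add₀ ht.ne_zero]; congr 1; ring
  have k2 : t ^ (la + ld + 2) * t ^ (E + (a - d) - (la + ld + 2)) = t ^ E * t ^ (a - d) := by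
    rw [← zpow_add₀ ht.ne_zero, ← zpow_add₀ ht.ne_zero]; congr 1; ring
  have hs : t ^ a = t ^ (a - d) * t ^ d := by
    rw [← zpow_add₀ ht.ne_zero]; congr 1; ring
  have hV : V t a * (U t (a - b) * U t c * U t (b - c) * (1 - t ^ (a - b)))
      = V t (a - 1) * (1 - t ^ a) * (U t (a - b) * U t c * U t (b - c) * (1 - t ^ (a - b))) := by
    rcases eq_or_ne a 0 with rfl | ha
    · rw [vanish_abc b c _ (by omega)]; ring
    · rw [← V_rec ha]
  rw [← mul_assoc (t ^ (la + 1)), k1, ← mul_assoc (t ^ (la + ld + 2)), k2, zpow_zero]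
  simp only [ht.U_rec (a - b), ht.U_rec d, ht.U_rec (a - d)]
  rw [hs] at hV
  linear_combination (t ^ E * U t d * U t (a - d) * U t (n - a)) * hV

lemma relTbc (n la lb lc ld : ℤ) : gSum t n la lb lc ld - gSum t n la (lb + 1) (lc - 1) ld
    = t ^ (la + lb + 1) * gSum t (n - 1) (la + 1) (lb + 1) lc (ld + 1)
      + t ^ (la + lb + ld + 3) * gSum t (n - 1) (la + 2) (lb + 2) lc (ld + 2) := by
  have := gSum_relation (t := t)
    (n₁ := n) (la₁ := la) (lb₁ := lb) (lc₁ := lc) (ld₁ := ld)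
    (n₂ := n) (la₂ := la) (lb₂ := lb + 1) (lc₂ := lc - 1) (ld₂ := ld)
    (n₃ := n - 1) (la₃ := la + 1) (lb₃ := lb + 1) (lc₃ := lc) (ld₃ := ld + 1)
      (k₃ := t ^ (la + lb + 1))
    (n₄ := n - 1) (la₄ := la + 2) (lb₄ := lb + 2) (lc₄ := lc) (ld₄ := ld + 2)
      (k₄ := t ^ (la + lb + ld + 3))
    (n₅ := n) (la₅ := la) (lb₅ := lb) (lc₅ := lc) (ld₅ := ld) (k₅ := 0)
    (1, 1, 0, 0) (1, 1, 0, 1) 0 ?_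
  · linear_combination this
  rintro ⟨a, b, c, d⟩
  set E := a ^ 2 + b ^ 2 + c ^ 2 + d ^ 2 - a * b + b * d + (la * a + lb * b + lc * c + ld * d)
    with hE
  rw [show ((a, b, c, d) - (1, 1, 0, 0) : ℤ × ℤ × ℤ × ℤ) = (a - 1, b - 1, c, d) by simp]
  rw [show ((a, b, c, d) - (1, 1, 0, 1) : ℤ × ℤ × ℤ × ℤ) = (a - 1, b - 1, c, d - 1) by simp]
  rw [sumTerm_eq (n := n) (la := la) (lb := lb) (lc := lc) (ld := ld) E (by simp only [hE]) rfl rfl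
      rfl rfl rfl rfl rfl,
    sumTerm_eq (n := n) (la := la) (lb := lb + 1) (lc := lc - 1) (ld := ld) (E + (b - c))
      (by simp only [hE]; ring) rfl rfl rfl rfl rfl rfl rfl,
    sumTerm_eq (n := n - 1) (la := la + 1) (lb := lb + 1) (lc := lc) (ld := ld + 1)
      (E - (la + lb + 1))
      (i₁ := a - 1) (i₂ := a - b) (i₃ := d) (i₄ := a - d - 1) (i₅ := c) (i₆ := b - c - 1)
        (i₇ := n - a)
      (by simp only [hE]; ring) (by ring) (by ring) (by ring) (by ring) (by ring) (by ring)
        (by ring),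
    sumTerm_eq (n := n - 1) (la := la + 2) (lb := lb + 2) (lc := lc) (ld := ld + 2)
      (E + (a - d) - (la + lb + ld + 3))
      (i₁ := a - 1) (i₂ := a - b) (i₃ := d - 1) (i₄ := a - d) (i₅ := c) (i₆ := b - c - 1)
        (i₇ := n - a)
      (by simp only [hE]; ring) (by ring) (by ring) (by ring) (by ring) (by ring) (by ring)
        (by ring),
    zpow_add₀ ht.ne_zero E]
  have k1 : t ^ (la + lb + 1) * t ^ (E - (la + lb + 1)) = t ^ E * t ^ (0 : ℤ) := by
    rw [← zpow_add₀ ht.ne_zero, ← zpow_add₀ ht.ne_zero]; congr 1; ring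
  have k2 : t ^ (la + lb + ld + 3) * t ^ (E + (a - d) - (la + lb + ld + 3)) = t ^ E * t ^ (a
    - d) := by
    rw [← zpow_add₀ ht.ne_zero, ← zpow_add₀ ht.ne_zero]; congr 1; ring
  have hs : t ^ a = t ^ (a - d) * t ^ d := by
    rw [← zpow_add₀ ht.ne_zero]; congr 1; ring
  have hV : V t a * (U t (a - b) * U t c * U t (b - c) * (1 - t ^ (b - c)))
      = V t (a - 1) * (1 - t ^ a) * (U t (a - b) * U t c * U t (b - c) * (1 - t ^ (b - c))) := by
    rcases eq_or_ne a 0 with rfl | ha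
    · rw [vanish_abc b c _ (by omega)]; ring
    · rw [← V_rec ha]
  rw [← mul_assoc (t ^ (la + lb + 1)), k1, ← mul_assoc (t ^ (la + lb + ld + 3)), k2, zpow_zero]
  simp only [ht.U_rec d, ht.U_rec (a - d), ht.U_rec (b - c)]
  rw [hs] at hV
  linear_combination (t ^ E * U t d * U t (a - d) * U t (n - a)) * hV

lemma relTc (n la lb lc ld : ℤ) : gSum t n la lb lc ld - gSum t n la lb (lc + 1) ld
    = t ^ (la + lb + lc + 2) * gSum t (n - 1) (la + 1) (lb + 1) (lc + 2) (ld + 1)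
      + t ^ (la + lb + lc + ld + 4) * gSum t (n - 1) (la + 2) (lb + 2) (lc + 2) (ld + 2) := by
  have := gSum_relation (t := t)
    (n₁ := n) (la₁ := la) (lb₁ := lb) (lc₁ := lc) (ld₁ := ld)
    (n₂ := n) (la₂ := la) (lb₂ := lb) (lc₂ := lc + 1) (ld₂ := ld)
    (n₃ := n - 1) (la₃ := la + 1) (lb₃ := lb + 1) (lc₃ := lc + 2) (ld₃ := ld + 1)
      (k₃ := t ^ (la + lb + lc + 2))
    (n₄ := n - 1) (la₄ := la + 2) (lb₄ := lb + 2) (lc₄ := lc + 2) (ld₄ := ld + 2)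
      (k₄ := t ^ (la + lb + lc + ld + 4))
    (n₅ := n) (la₅ := la) (lb₅ := lb) (lc₅ := lc) (ld₅ := ld) (k₅ := 0)
    (1, 1, 1, 0) (1, 1, 1, 1) 0 ?_
  · linear_combination this
  rintro ⟨a, b, c, d⟩
  set E := a ^ 2 + b ^ 2 + c ^ 2 + d ^ 2 - a * b + b * d + (la * a + lb * b + lc * c + ld * d)
    with hE
  rw [show ((a, b, c, d) - (1, 1, 1, 0) : ℤ × ℤ × ℤ × ℤ) = (a - 1, b - 1, c - 1, d) by simp]
  rw [show ((a, b, c, d) - (1, 1, 1, 1) : ℤ × ℤ × ℤ × ℤ) = (a - 1, b - 1, c - 1, d - 1) by simp]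
  rw [sumTerm_eq (n := n) (la := la) (lb := lb) (lc := lc) (ld := ld) E (by simp only [hE]) rfl rfl
      rfl rfl rfl rfl rfl,
    sumTerm_eq (n := n) (la := la) (lb := lb) (lc := lc + 1) (ld := ld) (E + c)
      (by simp only [hE]; ring) rfl rfl rfl rfl rfl rfl rfl,
    sumTerm_eq (n := n - 1) (la := la + 1) (lb := lb + 1) (lc := lc + 2) (ld := ld + 1)
      (E - (la + lb + lc + 2))
      (i₁ := a - 1) (i₂ := a - b) (i₃ := d) (i₄ := a - d - 1) (i₅ := c - 1) (i₆ := b - c)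
        (i₇ := n - a)
      (by simp only [hE]; ring) (by ring) (by ring) (by ring) (by ring) (by ring) (by ring)
        (by ring),
    sumTerm_eq (n := n - 1) (la := la + 2) (lb := lb + 2) (lc := lc + 2) (ld := ld + 2)
      (E + (a - d) - (la + lb + lc + ld + 4))
      (i₁ := a - 1) (i₂ := a - b) (i₃ := d - 1) (i₄ := a - d) (i₅ := c - 1) (i₆ := b - c)
        (i₇ := n - a)
      (by simp only [hE]; ring) (by ring) (by ring) (by ring) (by ring) (by ring) (by ring)
        (by ring),
    zpow_add₀ ht.ne_zero E]
  have k1 : t ^ (la + lb + lc + 2) * t ^ (E - (la + lb + lc + 2)) = t ^ E * t ^ (0 : ℤ) := by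
    rw [← zpow_add₀ ht.ne_zero, ← zpow_add₀ ht.ne_zero]; congr 1; ring
  have k2 : t ^ (la + lb + lc + ld + 4) * t ^ (E + (a - d)
    - (la + lb + lc + ld + 4)) = t ^ E * t ^ (a - d) := by
    rw [← zpow_add₀ ht.ne_zero, ← zpow_add₀ ht.ne_zero]; congr 1; ring
  have hs : t ^ a = t ^ (a - d) * t ^ d := by
    rw [← zpow_add₀ ht.ne_zero]; congr 1; ring
  have hV : V t a * (U t (a - b) * U t c * U t (b - c) * (1 - t ^ c))
      = V t (a - 1) * (1 - t ^ a) * (U t (a - b) * U t c * U t (b - c) * (1 - t ^ c)) := by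
    rcases eq_or_ne a 0 with rfl | ha
    · rw [vanish_abc b c _ (by omega)]; ring
    · rw [← V_rec ha]
  rw [← mul_assoc (t ^ (la + lb + lc + 2)), k1, ← mul_assoc (t ^ (la + lb + lc + ld + 4)), k2,
      zpow_zero]
  simp only [ht.U_rec d, ht.U_rec (a - d), ht.U_rec c]
  rw [hs] at hV
  linear_combination (t ^ E * U t d * U t (a - d) * U t (n - a)) * hV

/-! ### The sum side solves the system

Each equation of the system is a linear combination, with coefficients polynomial in `t` and
`t ^ n`, of finitely many instances of the contiguity relations; the coefficients come from
solving a linear system.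
-/

lemma gProfiles_500 (n : ℤ) :
    (gProfiles t n).p500 - t ^ n * (gProfiles t n).p410
      = (gProfiles t (n - 1)).p500 := by
  have r1 : gSum t (n - 1) 1 1 1 1 = gSum t n 1 1 1 1 - t ^ n * gSum t n 0 1 1 1 := by
    simpa using relN ht n 0 1 1 1
  simp only [gProfiles]
  linear_combination -r1

lemma gProfiles_410 (n : ℤ) :
    (gProfiles t n).p410 - t ^ n * ((gProfiles t n).p320 + (gProfiles t n).p401)
      + (t ^ n) ^ 2 * (gProfiles t n).p311
      = (gProfiles t (n - 1)).p410 := by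
  have r1 : gSum t (n - 1) 0 1 1 1 = gSum t n 0 1 1 1 - t ^ n * gSum t n (-1) 1 1 1 := by
    simpa using relN ht n (-1) 1 1 1
  simp only [gProfiles]
  linear_combination -r1

lemma gProfiles_302 (n : ℤ) :
    (gProfiles t n).p302 - t ^ n * ((gProfiles t n).p221 + (gProfiles t n).p401)
      + (t ^ n) ^ 2 * (gProfiles t n).p311
      = (gProfiles t (n - 1)).p302 := by
  have r1 : gSum t (n - 1) 0 1 1 0 = gSum t n 0 1 1 0 - t ^ n * gSum t n (-1) 1 1 0 := by
    simpa using relN ht n (-1) 1 1 0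
  have r2 : gSum t (n - 1) 1 0 0 0 = gSum t n 1 0 0 0 - t ^ n * gSum t n 0 0 0 0 := by
    simpa using relN ht n 0 0 0 0
  have r3 : gSum t (n - 1) 1 0 1 0 = gSum t n 1 0 1 0 - t ^ n * gSum t n 0 0 1 0 := by
    simpa using relN ht n 0 0 1 0
  have r4 : gSum t n (-1) 1 1 0 - gSum t n (-1) 1 1 1
      = t * gSum t n (-1) 2 1 2 - t * gSum t n 0 2 1 1 := by
    simpa using relD ht n (-1) 1 1 0
  have r5 : gSum t n 0 0 1 0 - gSum t n 0 0 1 1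
      = t * gSum t n 0 1 1 2 - t * gSum t n 1 1 1 1 := by
    simpa using relD ht n 0 0 1 0
  have r6 : gSum t n 0 0 1 1 - gSum t n 0 1 0 1
      = t * gSum t n (-1) 2 1 2 - t * gSum t n 0 1 1 2 := by
    simpa using relB ht n 0 0 1 1
  have r7 : gSum t n 1 0 1 0 - gSum t n 1 1 0 0
      = t * gSum t n 0 2 1 1 - t * gSum t n 1 1 1 1 := by
    simpa using relB ht n 1 0 1 0
  simp only [gProfiles]
  linear_combination -r1 - r2 + r3 + t ^ n * r4 - t ^ n * r5 - t ^ n * r6 + t ^ n * r7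

lemma gProfiles_311 (n : ℤ) :
    (gProfiles t n).p311 - t ^ n * ((gProfiles t n).p221 + (gProfiles t n).p302
      + (gProfiles t n).p410)
      + (t ^ n) ^ 2 * ((gProfiles t n).p221 + (gProfiles t n).p320 + (gProfiles t n).p401)
        - (t ^ n) ^ 3 * (gProfiles t n).p311
      = (gProfiles t (n - 1)).p311 := by
  have e410 := gProfiles_410 ht n
  have r1 : gSum t (n - 1) 0 0 1 0 = gSum t n 0 0 1 0 - t ^ n * gSum t n (-1) 0 1 0 := by
    simpa using relN ht n (-1) 0 1 0
  have r2 : gSum t (n - 1) 1 0 0 0 = gSum t n 1 0 0 0 - t ^ n * gSum t n 0 0 0 0 := by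
    simpa using relN ht n 0 0 0 0
  have r3 : gSum t n (-1) 1 0 0 - gSum t n 0 0 0 0
      = gSum t (n - 1) 1 0 0 0 + t * gSum t (n - 1) 2 1 0 1 := by
    simpa using relTab ht n (-1) 1 0 0
  have r4 : gSum t n (-1) 1 1 0 - gSum t n 0 0 1 0
      = gSum t (n - 1) 1 0 1 0 + t * gSum t (n - 1) 2 1 1 1 := by
    simpa using relTab ht n (-1) 1 1 0
  have r5 : gSum t n (-1) 1 1 1 - gSum t n 0 1 1 0
      = gSum t (n - 1) 1 0 1 1 + t * gSum t (n - 1) 1 1 1 2 + t ^ 3 * gSum t (n - 1) 1 2 2 2 := by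
    simpa using relTad ht n (-1) 1 1 1
  have r6 : gSum t n 0 1 0 1 - gSum t n 1 1 0 0
      = t * gSum t (n - 1) 2 0 0 1 + t ^ 2 * gSum t (n - 1) 2 1 0 2 + t ^ 3 * gSum t (n - 1) 2 2 1
        2 := by
    simpa using relTad ht n 0 1 0 1
  have r7 : gSum t n (-1) 0 1 0 - gSum t n (-1) 1 0 0
      = gSum t (n - 1) 0 1 1 1 + t ^ 2 * gSum t (n - 1) 1 2 1 2 := by
    simpa using relTbc ht n (-1) 0 1 0
  have r8 : gSum t n (-1) 1 1 0 - gSum t n (-1) 1 1 1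
      = t * gSum t n (-1) 2 1 2 - t * gSum t n 0 2 1 1 := by
    simpa using relD ht n (-1) 1 1 0
  have r9 : gSum t n 0 0 1 0 - gSum t n 0 0 1 1
      = t * gSum t n 0 1 1 2 - t * gSum t n 1 1 1 1 := by
    simpa using relD ht n 0 0 1 0
  have r10 : gSum t n 0 0 1 1 - gSum t n 0 1 0 1
      = t * gSum t n (-1) 2 1 2 - t * gSum t n 0 1 1 2 := by
    simpa using relB ht n 0 0 1 1
  have r11 : gSum t n 1 0 1 0 - gSum t n 1 1 0 0
      = t * gSum t n 0 2 1 1 - t * gSum t n 1 1 1 1 := by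
    simpa using relB ht n 1 0 1 0
  have r12 : gSum t (n - 1) 1 0 1 0 - gSum t (n - 1) 1 0 1 1
      = t * gSum t (n - 1) 1 1 1 2 - t * gSum t (n - 1) 2 1 1 1 := by
    simpa using relD ht (n - 1) 1 0 1 0
  have r13 : gSum t (n - 1) 2 1 0 2 - gSum t (n - 1) 2 1 1 2
      = t * gSum t (n - 1) 2 1 2 2 - t * gSum t (n - 1) 2 2 1 2 := by
    simpa using relC ht (n - 1) 2 1 0 2
  have r14 : gSum t (n - 1) 2 0 1 1 - gSum t (n - 1) 2 1 0 1
      = t * gSum t (n - 1) 1 2 1 2 - t * gSum t (n - 1) 2 1 1 2 := by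
    simpa using relB ht (n - 1) 2 0 1 1
  have r15 : gSum t (n - 1) 2 0 0 1 - gSum t (n - 1) 2 0 1 1
      = t ^ 2 * gSum t (n - 1) 1 2 2 2 - t ^ 2 * gSum t (n - 1) 2 1 2 2 := by
    simpa using relBC ht (n - 1) 2 0 0 1
  simp only [gProfiles] at e410 ⊢
  linear_combination -t ^ n * e410 - r1 + t ^ n * r2 + t ^ n * r3 - t ^ n * r4 + t ^ n * r5
    - t ^ n * r6 + t ^ n * r7 + t ^ n * r8 - t ^ n * r9 - t ^ n * r10 + t ^ n * r11 - t ^ n * r12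
    - t ^ 2 * t ^ n * r13 - t * t ^ n * r14 - t * t ^ n * r15

lemma gProfiles_320 (n : ℤ) :
    (gProfiles t n).p320 - t ^ n * ((gProfiles t n).p302 + (gProfiles t n).p311)
      + (t ^ n) ^ 2 * (gProfiles t n).p221
      = (gProfiles t (n - 1)).p320 := by
  have e311 := gProfiles_311 ht n
  have r1 : gSum t (n - 1) 0 0 1 0 = gSum t n 0 0 1 0 - t ^ n * gSum t n (-1) 0 1 0 := by
    simpa using relN ht n (-1) 0 1 0
  have r2 : gSum t (n - 1) 0 1 0 1 = gSum t n 0 1 0 1 - t ^ n * gSum t n (-1) 1 0 1 := by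
    simpa using relN ht n (-1) 1 0 1
  have r3 : gSum t (n - 1) 0 1 1 1 = gSum t n 0 1 1 1 - t ^ n * gSum t n (-1) 1 1 1 := by
    simpa using relN ht n (-1) 1 1 1
  have r4 : gSum t (n - 1) 1 0 1 0 = gSum t n 1 0 1 0 - t ^ n * gSum t n 0 0 1 0 := by
    simpa using relN ht n 0 0 1 0
  have r5 : gSum t (n - 1) 1 1 0 0 = gSum t n 1 1 0 0 - t ^ n * gSum t n 0 1 0 0 := by
    simpa using relN ht n 0 1 0 0
  have r6 : gSum t n (-1) 1 0 0 - gSum t n 0 0 0 0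
      = gSum t (n - 1) 1 0 0 0 + t * gSum t (n - 1) 2 1 0 1 := by
    simpa using relTab ht n (-1) 1 0 0
  have r7 : gSum t n (-1) 1 0 1 - gSum t n 0 1 0 0
      = gSum t (n - 1) 1 0 0 1 + t * gSum t (n - 1) 1 1 0 2 + t ^ 2 * gSum t (n - 1) 1 2 1 2 := by
    simpa using relTad ht n (-1) 1 0 1
  have r8 : gSum t n (-1) 0 1 0 - gSum t n (-1) 1 0 0
      = gSum t (n - 1) 0 1 1 1 + t ^ 2 * gSum t (n - 1) 1 2 1 2 := by
    simpa using relTbc ht n (-1) 0 1 0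
  have r9 : gSum t (n - 1) 1 0 0 0 - gSum t (n - 1) 1 0 0 1
      = t * gSum t (n - 1) 1 1 0 2 - t * gSum t (n - 1) 2 1 0 1 := by
    simpa using relD ht (n - 1) 1 0 0 0
  simp only [gProfiles] at e311 ⊢
  linear_combination e311 + r1 - r2 - t ^ n * r3 - r4 + r5 - t ^ n * r6
    + t ^ n * r7 - t ^ n * r8 - t ^ n * r9

lemma gProfiles_221 (n : ℤ) :
    (gProfiles t n).p221 - t ^ n * ((gProfiles t n).p311 + (gProfiles t n).p221
      + (gProfiles t n).p320)
      + (t ^ n) ^ 2 * ((gProfiles t n).p221 + (gProfiles t n).p302 + (gProfiles t n).p311)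
        - (t ^ n) ^ 3 * (gProfiles t n).p221
      = (gProfiles t (n - 1)).p221 := by
  have e311 := gProfiles_311 ht n
  have e320 := gProfiles_320 ht n
  have r1 : gSum t (n - 1) 0 0 0 0 = gSum t n 0 0 0 0 - t ^ n * gSum t n (-1) 0 0 0 := by
    simpa using relN ht n (-1) 0 0 0
  have r2 : gSum t (n - 1) 0 0 1 0 = gSum t n 0 0 1 0 - t ^ n * gSum t n (-1) 0 1 0 := by
    simpa using relN ht n (-1) 0 1 0
  have r3 : gSum t (n - 1) 0 1 1 1 = gSum t n 0 1 1 1 - t ^ n * gSum t n (-1) 1 1 1 := by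
    simpa using relN ht n (-1) 1 1 1
  have r4 : gSum t n (-1) 1 2 0 - gSum t n 0 0 2 0
      = gSum t (n - 1) 1 0 2 0 + t * gSum t (n - 1) 2 1 2 1 := by
    simpa using relTab ht n (-1) 1 2 0
  have r5 : gSum t n (-1) 1 0 1 - gSum t n 0 1 0 0
      = gSum t (n - 1) 1 0 0 1 + t * gSum t (n - 1) 1 1 0 2 + t ^ 2 * gSum t (n - 1) 1 2 1 2 := by
    simpa using relTad ht n (-1) 1 0 1
  have r6 : gSum t n (-1) 1 1 1 - gSum t n 0 1 1 0
      = gSum t (n - 1) 1 0 1 1 + t * gSum t (n - 1) 1 1 1 2 + t ^ 3 * gSum t (n - 1) 1 2 2 2 := by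
    simpa using relTad ht n (-1) 1 1 1
  have r7 : gSum t n (-1) 0 0 0 - gSum t n (-1) 0 1 0
      = t * gSum t (n - 1) 0 1 2 1 + t ^ 3 * gSum t (n - 1) 1 2 2 2 := by
    simpa using relTc ht n (-1) 0 0 0
  have r8 : gSum t n (-1) 1 2 0 - gSum t n (-1) 1 2 1
      = t * gSum t n (-1) 2 2 2 - t * gSum t n 0 2 2 1 := by
    simpa using relD ht n (-1) 1 2 0
  have r9 : gSum t n 0 0 2 0 - gSum t n 0 0 2 1
      = t * gSum t n 0 1 2 2 - t * gSum t n 1 1 2 1 := by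
    simpa using relD ht n 0 0 2 0
  have r10 : gSum t n (-1) 1 0 1 - gSum t n (-1) 1 1 1
      = t * gSum t n (-1) 1 2 1 - t * gSum t n (-1) 2 1 1 := by
    simpa using relC ht n (-1) 1 0 1
  have r11 : gSum t n 1 0 0 0 - gSum t n 1 0 1 0
      = t * gSum t n 1 0 2 0 - t * gSum t n 1 1 1 0 := by
    simpa using relC ht n 1 0 0 0
  have r12 : gSum t n 0 0 1 0 - gSum t n 0 1 0 0
      = t * gSum t n (-1) 2 1 1 - t * gSum t n 0 1 1 1 := by
    simpa using relB ht n 0 0 1 0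
  have r13 : gSum t n 0 0 2 1 - gSum t n 0 1 1 1
      = t * gSum t n (-1) 2 2 2 - t * gSum t n 0 1 2 2 := by
    simpa using relB ht n 0 0 2 1
  have r14 : gSum t n 1 0 2 0 - gSum t n 1 1 1 0
      = t * gSum t n 0 2 2 1 - t * gSum t n 1 1 2 1 := by
    simpa using relB ht n 1 0 2 0
  have r15 : gSum t (n - 1) 1 0 2 0 - gSum t (n - 1) 1 0 2 1
      = t * gSum t (n - 1) 1 1 2 2 - t * gSum t (n - 1) 2 1 2 1 := by
    simpa using relD ht (n - 1) 1 0 2 0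
  have r16 : gSum t (n - 1) 0 1 0 1 - gSum t (n - 1) 0 1 1 1
      = t * gSum t (n - 1) 0 1 2 1 - t * gSum t (n - 1) 0 2 1 1 := by
    simpa using relC ht (n - 1) 0 1 0 1
  have r17 : gSum t (n - 1) 1 0 0 1 - gSum t (n - 1) 1 0 1 1
      = t * gSum t (n - 1) 1 0 2 1 - t * gSum t (n - 1) 1 1 1 1 := by
    simpa using relC ht (n - 1) 1 0 0 1
  have r18 : gSum t (n - 1) 1 1 0 2 - gSum t (n - 1) 1 1 1 2
      = t * gSum t (n - 1) 1 1 2 2 - t * gSum t (n - 1) 1 2 1 2 := by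
    simpa using relC ht (n - 1) 1 1 0 2
  have r19 : gSum t (n - 1) 1 0 1 0 - gSum t (n - 1) 1 1 0 0
      = t * gSum t (n - 1) 0 2 1 1 - t * gSum t (n - 1) 1 1 1 1 := by
    simpa using relB ht (n - 1) 1 0 1 0
  simp only [gProfiles] at e311 e320 ⊢
  linear_combination e311 - t ^ n * e320 - r1 + r2 - t ^ n * r3 - t * t ^ n * r4
    + t ^ n * r5 - t ^ n * r6 + t ^ n * r7 + t * t ^ n * r8 - t * t ^ n * r9 - t ^ n * r10
    + t ^ n * r11 - t ^ n * r12 - t * t ^ n * r13 + t * t ^ n * r14 - t * t ^ n * r15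
    - t ^ n * r16 + t ^ n * r17 + t * t ^ n * r18 - t ^ n * r19

lemma gProfiles_401 (n : ℤ) :
    (gProfiles t n).p401 - t ^ n * ((gProfiles t n).p311 + (gProfiles t n).p500)
      + (t ^ n) ^ 2 * (gProfiles t n).p410
      = (gProfiles t (n - 1)).p401 := by
  have r1 : gSum t (n - 1) 0 1 0 1 = gSum t n 0 1 0 1 - t ^ n * gSum t n (-1) 1 0 1 := by
    simpa using relN ht n (-1) 1 0 1
  have r2 : gSum t (n - 1) 0 2 1 1 = gSum t n 0 2 1 1 - t ^ n * gSum t n (-1) 2 1 1 := by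
    simpa using relN ht n (-1) 2 1 1
  have r3 : gSum t (n - 1) (-1) 1 1 1 = gSum t n (-1) 1 1 1 - t ^ n * gSum t n (-2) 1 1 1 := by
    simpa using relN ht n (-2) 1 1 1
  have r4 : gSum t (n - 1) 1 1 1 1 = gSum t n 1 1 1 1 - t ^ n * gSum t n 0 1 1 1 := by
    simpa using relN ht n 0 1 1 1
  have r5 : gSum t n (-2) 1 1 0 - gSum t n (-1) 0 1 0
      = t⁻¹ * gSum t (n - 1) 0 0 1 0 + gSum t (n - 1) 1 1 1 1 := by
    simpa using relTab ht n (-2) 1 1 0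
  have r6 : gSum t n (-1) 0 1 0 - gSum t n (-1) 0 1 1
      = t * gSum t n (-1) 1 1 2 - t * gSum t n 0 1 1 1 := by
    simpa using relD ht n (-1) 0 1 0
  have r7 : gSum t n (-2) 1 1 0 - gSum t n (-2) 1 1 1
      = t * gSum t n (-2) 2 1 2 - t * gSum t n (-1) 2 1 1 := by
    simpa using relD ht n (-2) 1 1 0
  have r8 : gSum t n (-1) 0 1 1 - gSum t n (-1) 1 0 1
      = t * gSum t n (-2) 2 1 2 - t * gSum t n (-1) 1 1 2 := by
    simpa using relB ht n (-1) 0 1 1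
  have r9 : gSum t n 1 0 1 0 - gSum t n 1 1 0 0
      = t * gSum t n 0 2 1 1 - t * gSum t n 1 1 1 1 := by
    simpa using relB ht n 1 0 1 0
  have r10 : gSum t (n - 1) 1 0 1 0 - gSum t (n - 1) 1 1 0 0
      = t * gSum t (n - 1) 0 2 1 1 - t * gSum t (n - 1) 1 1 1 1 := by
    simpa using relB ht (n - 1) 1 0 1 0
  simp only [gProfiles]
  have hy : t ^ (n - 1) = t ^ n * t⁻¹ := by rw [zpow_sub_one₀ ht.ne_zero]
  have hi : t * t⁻¹ = 1 := mul_inv_cancel₀ ht.ne_zero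
  rw [hy]
  linear_combination r1 + t * r2 - r3 + (t ^ n - t) * r4 + t ^ n * r5 + t ^ n * r6
    - t ^ n * r7 + t ^ n * r8 - r9 + r10

lemma gProfiles_isStep (n : ℤ) :
    (gProfiles t n).IsStep (t ^ n) (gProfiles t (n - 1)) where
  e500 := gProfiles_500 ht n
  e410 := gProfiles_410 ht n
  e401 := gProfiles_401 ht n
  e320 := gProfiles_320 ht n
  e302 := gProfiles_302 ht n
  e311 := gProfiles_311 ht n
  e221 := gProfiles_221 ht n

end Relations

/-! ### The alternating sum -/

/-- The terms of positive sign of the alternating sum. The pair `x = (p, k)` parametrizes the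
integer triples `m = (p, p + 3 * k, -2 * p - 3 * k)`, that is, the triples with sum zero and
`m₂ ≡ m₁` modulo `3`; the denominators are `(t;t)_{n₁ + m₁} (t;t)_{n₂ + m₂} (t;t)_{n₃ + m₃}`. The
exponent is `(d₁ + d₂ + d₃) * Q(m)` plus a linear form in `m` with coefficients `d₂` and `d₃`. -/
noncomputable def posTerm (t : F) (n₁ n₂ n₃ d₁ d₂ d₃ : ℤ) (x : ℤ × ℤ) : F :=
  t ^ ((d₁ + d₂ + d₃) * (x.1 ^ 2 + x.1 * (3 * x.2 - 1) + x.2 * (3 * x.2 - 1))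
      + d₂ * x.1 + d₃ * (2 * x.1 + 3 * x.2))
    * (U t (n₁ + x.1) * U t (n₂ + (x.1 + 3 * x.2)) * U t (n₃ + (-2 * x.1 - 3 * x.2)))

/-- The terms of negative sign of the alternating sum, over the triples
`m = (p, p + 3 * k + 1, -2 * p - 3 * k - 1)` of sum zero with `m₂ ≡ m₁ + 1` modulo `3`. -/
noncomputable def negTerm (t : F) (n₁ n₂ n₃ d₁ d₂ d₃ : ℤ) (x : ℤ × ℤ) : F :=
  t ^ ((d₁ + d₂ + d₃) * (x.1 ^ 2 + 3 * x.1 * x.2 + x.2 * (3 * x.2 + 1))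
      + d₂ * x.1 + d₃ * (2 * x.1 + 3 * x.2 + 1))
    * (U t (n₁ + x.1) * U t (n₂ + (x.1 + 3 * x.2 + 1)) * U t (n₃ + (-2 * x.1 - 3 * x.2 - 1)))

/-- The alternating `A₂` sum with three independent upper parameters `nᵢ` and weights `dᵢ`. -/
noncomputable def aSum (t : F) (n₁ n₂ n₃ d₁ d₂ d₃ : ℤ) : F :=
  ∑ᶠ x, posTerm t n₁ n₂ n₃ d₁ d₂ d₃ x - ∑ᶠ x, negTerm t n₁ n₂ n₃ d₁ d₂ d₃ x

lemma nonneg_of_U_ne_zero {k : ℤ} (h : U t k ≠ 0) : 0 ≤ k := by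
  by_contra hk
  exact h (U_neg (by omega))

lemma posTerm_bounds {n₁ n₂ n₃ d₁ d₂ d₃ : ℤ} {x : ℤ × ℤ}
    (h : posTerm t n₁ n₂ n₃ d₁ d₂ d₃ x ≠ 0) :
    0 ≤ n₁ + x.1 ∧ 0 ≤ n₂ + (x.1 + 3 * x.2) ∧ 0 ≤ n₃ + (-2 * x.1 - 3 * x.2) := by
  simp only [posTerm, mul_ne_zero_iff] at h
  exact ⟨nonneg_of_U_ne_zero h.2.1.1, nonneg_of_U_ne_zero h.2.1.2, nonneg_of_U_ne_zero h.2.2⟩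

lemma negTerm_bounds {n₁ n₂ n₃ d₁ d₂ d₃ : ℤ} {x : ℤ × ℤ}
    (h : negTerm t n₁ n₂ n₃ d₁ d₂ d₃ x ≠ 0) :
    0 ≤ n₁ + x.1 ∧ 0 ≤ n₂ + (x.1 + 3 * x.2 + 1) ∧ 0 ≤ n₃ + (-2 * x.1 - 3 * x.2 - 1) := by
  simp only [negTerm, mul_ne_zero_iff] at h
  exact ⟨nonneg_of_U_ne_zero h.2.1.1, nonneg_of_U_ne_zero h.2.1.2, nonneg_of_U_ne_zero h.2.2⟩

lemma posTerm_support_finite (n₁ n₂ n₃ d₁ d₂ d₃ : ℤ) :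
    (posTerm t n₁ n₂ n₃ d₁ d₂ d₃).HasFiniteSupport := by
  refine (Set.finite_Icc ((-n₁, (-2 * n₂ - n₃) / 3 - 1) : ℤ × ℤ)
    (n₂ + n₃, (n₃ + 2 * n₁) / 3 + 1)).subset fun x hx => ?_
  obtain ⟨h₁, h₂, h₃⟩ := posTerm_bounds hx
  rw [Set.mem_Icc, Prod.le_def, Prod.le_def]
  dsimp only
  omega

lemma negTerm_support_finite (n₁ n₂ n₃ d₁ d₂ d₃ : ℤ) :
    (negTerm t n₁ n₂ n₃ d₁ d₂ d₃).HasFiniteSupport := by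
  refine (Set.finite_Icc ((-n₁, (-2 * n₂ - n₃) / 3 - 1) : ℤ × ℤ)
    (n₂ + n₃, (n₃ + 2 * n₁) / 3 + 1)).subset fun x hx => ?_
  obtain ⟨h₁, h₂, h₃⟩ := negTerm_bounds hx
  rw [Set.mem_Icc, Prod.le_def, Prod.le_def]
  dsimp only
  omega

lemma aSum_zero (d₁ d₂ d₃ : ℤ) : aSum t 0 0 0 d₁ d₂ d₃ = 1 := by
  rw [aSum, finsum_eq_single _ (0, 0), finsum_eq_zero_of_forall_eq_zero]
  · simp [posTerm, U_zero]
  · intro x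
    by_contra h
    have := negTerm_bounds h
    omega
  · rintro ⟨p, k⟩ hx
    by_contra h
    have := posTerm_bounds h
    dsimp only at this
    exact hx (by rw [Prod.mk.injEq]; omega)

lemma finsum_combination {f₁ f₂ f₃ : ℤ × ℤ → F} (h₁ : f₁.HasFiniteSupport)
    (h₂ : f₂.HasFiniteSupport) (c : F) (h : ∀ x, f₃ x = f₁ x - c * f₂ x) :
    ∑ᶠ x, f₃ x = ∑ᶠ x, f₁ x - c * ∑ᶠ x, f₂ x := by
  rw [mul_finsum, ← finsum_sub_distrib h₁ (h₂.subset fun x hx => right_ne_zero_of_mul hx)]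
  exact finsum_congr h

/-- Lowering one parameter `nᵢ` is compensated by moving one unit of weight from `dᵢ` to its
cyclic successor. -/
lemma aSum_step₁ (ht : IsGeneric t) (n₁ n₂ n₃ d₁ d₂ d₃ : ℤ) :
    aSum t (n₁ - 1) n₂ n₃ d₁ d₂ d₃
      = aSum t n₁ n₂ n₃ d₁ d₂ d₃ - t ^ n₁ * aSum t n₁ n₂ n₃ (d₁ - 1) (d₂ + 1) d₃ := by
  have hp := finsum_combination (posTerm_support_finite (t := t) n₁ n₂ n₃ d₁ d₂ d₃)
    (posTerm_support_finite (t := t) n₁ n₂ n₃ (d₁ - 1) (d₂ + 1) d₃) (t ^ n₁)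
    (f₃ := posTerm t (n₁ - 1) n₂ n₃ d₁ d₂ d₃) ?_
  have hn := finsum_combination (negTerm_support_finite (t := t) n₁ n₂ n₃ d₁ d₂ d₃)
    (negTerm_support_finite (t := t) n₁ n₂ n₃ (d₁ - 1) (d₂ + 1) d₃) (t ^ n₁)
    (f₃ := negTerm t (n₁ - 1) n₂ n₃ d₁ d₂ d₃) ?_
  · rw [aSum, aSum, aSum, hp, hn]
    ring
  all_goals
    rintro ⟨p, k⟩
    simp only [posTerm, negTerm]
    rw [show n₁ - 1 + p = n₁ + p - 1 by ring, ht.U_rec, ← mul_assoc (t ^ n₁),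
      ← zpow_add₀ ht.ne_zero]
  · rw [show n₁ + ((d₁ - 1 + (d₂ + 1) + d₃) * (p ^ 2 + 3 * p * k + k * (3 * k + 1))
        + (d₂ + 1) * p + d₃ * (2 * p + 3 * k + 1))
      = (d₁ + d₂ + d₃) * (p ^ 2 + 3 * p * k + k * (3 * k + 1)) + d₂ * p
        + d₃ * (2 * p + 3 * k + 1) + (n₁ + p) by ring, zpow_add₀ ht.ne_zero _ (n₁ + p)]
    ring
  · rw [show n₁ + ((d₁ - 1 + (d₂ + 1) + d₃) * (p ^ 2 + p * (3 * k - 1) + k * (3 * k - 1))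
        + (d₂ + 1) * p + d₃ * (2 * p + 3 * k))
      = (d₁ + d₂ + d₃) * (p ^ 2 + p * (3 * k - 1) + k * (3 * k - 1)) + d₂ * p
        + d₃ * (2 * p + 3 * k) + (n₁ + p) by ring, zpow_add₀ ht.ne_zero _ (n₁ + p)]
    ring

/-- The cyclic rotation `(m₁, m₂, m₃) ↦ (m₂, m₃, m₁)` of the triples occurring in `posTerm`, in the
coordinates `(p, k)`. -/
def posRot : ℤ × ℤ ≃ ℤ × ℤ where
  toFun x := (x.1 + 3 * x.2, -x.1 - 2 * x.2)
  invFun x := (-2 * x.1 - 3 * x.2, x.1 + x.2)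
  left_inv x := by ext <;> dsimp only <;> ring
  right_inv x := by ext <;> dsimp only <;> ring

/-- The cyclic rotation `(m₁, m₂, m₃) ↦ (m₂, m₃, m₁)` of the triples occurring in `negTerm`. -/
def negRot : ℤ × ℤ ≃ ℤ × ℤ where
  toFun x := (x.1 + 3 * x.2 + 1, -x.1 - 2 * x.2 - 1)
  invFun x := (-2 * x.1 - 3 * x.2 - 1, x.1 + x.2)
  left_inv x := by ext <;> dsimp only <;> ring
  right_inv x := by ext <;> dsimp only <;> ring

/-- The bijection from positive to negative indices that interchanges, up to a shift by one, the
first two entries: the triple `m` goes to `(m₂ + 1, m₁ - 1, m₃)`. -/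
def posNeg : ℤ × ℤ ≃ ℤ × ℤ where
  toFun x := (x.1 + 3 * x.2 + 1, -x.2 - 1)
  invFun x := (x.1 + 3 * x.2 + 2, -x.2 - 1)
  left_inv x := by ext <;> dsimp only <;> ring
  right_inv x := by ext <;> dsimp only <;> ring

lemma aSum_rotate (n₁ n₂ n₃ d₁ d₂ d₃ : ℤ) :
    aSum t n₁ n₂ n₃ d₁ d₂ d₃ = aSum t n₃ n₁ n₂ d₃ d₁ d₂ := by
  rw [aSum, aSum, ← finsum_comp_equiv posRot (f := posTerm t n₁ n₂ n₃ d₁ d₂ d₃),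
    ← finsum_comp_equiv negRot (f := negTerm t n₁ n₂ n₃ d₁ d₂ d₃)]
  congr 1 <;> refine finsum_congr fun ⟨p, k⟩ => ?_
  · simp only [posTerm, posRot, Equiv.coe_fn_mk]
    rw [show p + 3 * k + 3 * (-p - 2 * k) = -2 * p - 3 * k by ring,
      show -2 * (p + 3 * k) - 3 * (-p - 2 * k) = p by ring, mul_assoc (U t (n₃ + _)),
      mul_comm (U t (n₃ + _))]
    congr 2
    ring
  · simp only [negTerm, negRot, Equiv.coe_fn_mk]
    rw [show p + 3 * k + 1 + 3 * (-p - 2 * k - 1) + 1 = -2 * p - 3 * k - 1 by ring,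
      show -2 * (p + 3 * k + 1) - 3 * (-p - 2 * k - 1) - 1 = p by ring, mul_assoc (U t (n₃ + _)),
      mul_comm (U t (n₃ + _))]
    congr 2
    ring

/-- Reflection antisymmetry: when `d₂ = 0` and `n₂ = n₁ + 1`, the positive and negative terms
cancel under `posNeg`. -/
lemma aSum_wall (n n₃ d₁ d₃ : ℤ) : aSum t (n - 1) n n₃ d₁ 0 d₃ = 0 := by
  rw [aSum, sub_eq_zero, ← finsum_comp_equiv posNeg (f := negTerm t (n - 1) n n₃ d₁ 0 d₃)]
  refine finsum_congr fun ⟨p, k⟩ => ?_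
  rw [posTerm, negTerm]
  simp only [posNeg, Equiv.coe_fn_mk]
  rw [mul_comm (U t (n - 1 + _)) (U t (n + _))]
  congr 1
  · congr 1; ring
  · congr 1
    · congr 1 <;> congr 1 <;> ring
    · congr 1; ring

lemma aSum_step₂ (ht : IsGeneric t) (n₁ n₂ n₃ d₁ d₂ d₃ : ℤ) :
    aSum t n₁ (n₂ - 1) n₃ d₁ d₂ d₃
      = aSum t n₁ n₂ n₃ d₁ d₂ d₃ - t ^ n₂ * aSum t n₁ n₂ n₃ d₁ (d₂ - 1) (d₃ + 1) := by
  have := aSum_step₁ ht n₂ n₃ n₁ d₂ d₃ d₁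
  rwa [aSum_rotate (n₂ - 1), aSum_rotate n₂, aSum_rotate n₂] at this

lemma aSum_step₃ (ht : IsGeneric t) (n₁ n₂ n₃ d₁ d₂ d₃ : ℤ) :
    aSum t n₁ n₂ (n₃ - 1) d₁ d₂ d₃
      = aSum t n₁ n₂ n₃ d₁ d₂ d₃ - t ^ n₃ * aSum t n₁ n₂ n₃ (d₁ + 1) d₂ (d₃ - 1) := by
  have := aSum_step₂ ht n₂ n₃ n₁ d₂ d₃ d₁
  rwa [aSum_rotate n₂, aSum_rotate n₂, aSum_rotate n₂] at this

/-- The alternating sum with equal upper parameters. -/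
noncomputable def aDiag (t : F) (n d₁ d₂ d₃ : ℤ) : F := aSum t n n n d₁ d₂ d₃

lemma aDiag_rotate (n d₁ d₂ d₃ : ℤ) : aDiag t n d₁ d₂ d₃ = aDiag t n d₃ d₁ d₂ := aSum_rotate ..

section

variable (ht : IsGeneric t)
include ht

/-- Lowering the three parameters one after the other: the equation of the system for a
composition without zero part (all `dᵢ ≥ 2`). -/
lemma aDiag_full (n d₁ d₂ d₃ : ℤ) :
    aDiag t n d₁ d₂ d₃
      - t ^ n * (aDiag t n (d₁ - 1) (d₂ + 1) d₃ + aDiag t n d₁ (d₂ - 1) (d₃ + 1)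
        + aDiag t n (d₁ + 1) d₂ (d₃ - 1))
      + (t ^ n) ^ 2 * (aDiag t n (d₁ - 1) d₂ (d₃ + 1) + aDiag t n d₁ (d₂ + 1) (d₃ - 1)
        + aDiag t n (d₁ + 1) (d₂ - 1) d₃)
      - (t ^ n) ^ 3 * aDiag t n d₁ d₂ d₃ = aDiag t (n - 1) d₁ d₂ d₃ := by
  have h₃ := aSum_step₃ ht (n - 1) (n - 1) n d₁ d₂ d₃
  have h₂ := aSum_step₂ ht (n - 1) n n d₁ d₂ d₃
  have h₂' := aSum_step₂ ht (n - 1) n n (d₁ + 1) d₂ (d₃ - 1)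
  have h₁ := aSum_step₁ ht n n n d₁ d₂ d₃
  have h₁' := aSum_step₁ ht n n n (d₁ + 1) d₂ (d₃ - 1)
  have h₁₂ := aSum_step₁ ht n n n d₁ (d₂ - 1) (d₃ + 1)
  have h₁₂' := aSum_step₁ ht n n n (d₁ + 1) (d₂ - 1) d₃
  simp only [add_sub_cancel_right, sub_add_cancel] at h₂ h₂' h₁ h₁' h₁₂ h₁₂'
  simp only [aDiag]
  linear_combination -h₃ - h₂ - h₁ + t ^ n * (h₂' + h₁' + h₁₂) - (t ^ n) ^ 2 * h₁₂'

/-- The equation of the system when `d₃ = 1`; the terms with `d₃ - 1 = 0` vanish by `aSum_wall`. -/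
lemma aDiag_wall₁ (n d₁ d₂ : ℤ) :
    aDiag t n d₁ d₂ 1 - t ^ n * (aDiag t n (d₁ - 1) (d₂ + 1) 1 + aDiag t n d₁ (d₂ - 1) 2)
      + (t ^ n) ^ 2 * aDiag t n (d₁ - 1) d₂ 2 = aDiag t (n - 1) d₁ d₂ 1 := by
  have h₃ := aSum_step₃ ht (n - 1) (n - 1) n d₁ d₂ 1
  have hw := aSum_wall (t := t) n (n - 1) d₂ (d₁ + 1)
  have h₂ := aSum_step₂ ht (n - 1) n n d₁ d₂ 1
  have h₁ := aSum_step₁ ht n n n d₁ d₂ 1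
  have h₁₂ := aSum_step₁ ht n n n d₁ (d₂ - 1) 2
  rw [aSum_rotate] at hw
  rw [sub_self, hw] at h₃
  rw [one_add_one_eq_two] at h₂
  simp only [sub_add_cancel] at h₁₂
  simp only [aDiag]
  linear_combination -h₃ - h₂ - h₁ + t ^ n * h₁₂

/-- The equation of the system when `d₂ = d₃ = 1`. -/
lemma aDiag_wall₂ (n d₁ : ℤ) :
    aDiag t n d₁ 1 1 - t ^ n * aDiag t n (d₁ - 1) 2 1 = aDiag t (n - 1) d₁ 1 1 := by
  have h₃ := aSum_step₃ ht (n - 1) (n - 1) n d₁ 1 1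
  have hw := aSum_wall (t := t) n (n - 1) 1 (d₁ + 1)
  have h₂ := aSum_step₂ ht (n - 1) n n d₁ 1 1
  have h₁ := aSum_step₁ ht n n n d₁ 1 1
  rw [aSum_rotate] at hw
  rw [sub_self, hw] at h₃
  rw [sub_self, aSum_wall] at h₂
  rw [one_add_one_eq_two] at h₁
  simp only [aDiag]
  linear_combination -h₃ - h₂ - h₁

/-- For weights `(2, 1, 1)` the system reduces to a single first-order recursion, and the
alternating sum is a product. -/
lemma aDiag_level_one (n : ℕ) : aDiag t n 2 1 1 = U t n := by
  induction n with
  | zero => simp [aDiag, aSum_zero, U_zero]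
  | succ n ih =>
    have h := aDiag_wall₂ ht (n + 1) 2
    have h' := ht.U_rec (n + 1)
    norm_num at h h'
    rw [ih, h', ← aDiag_rotate (t := t) _ 2 1 1] at h
    have hne : 1 - t ^ ((n : ℤ) + 1) ≠ 0 := by
      intro h0
      exact ht.pow_ne_one n (by rw [← zpow_natCast]; push_cast; exact (sub_eq_zero.mp h0).symm)
    push_cast
    apply mul_right_cancel₀ hne
    linear_combination h

end

/-- The solution of the system on the alternating side: a composition `c` corresponds to the
weights `dᵢ = cᵢ + 1`. -/
noncomputable def aProfiles (t : F) (n : ℤ) : Profiles F where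
  p500 := aDiag t n 6 1 1
  p410 := aDiag t n 5 2 1
  p401 := aDiag t n 5 1 2
  p320 := aDiag t n 4 3 1
  p302 := aDiag t n 4 1 3
  p311 := aDiag t n 4 2 2
  p221 := aDiag t n 3 3 2

lemma aProfiles_isStep (ht : IsGeneric t) (n : ℤ) :
    (aProfiles t n).IsStep (t ^ n) (aProfiles t (n - 1)) where
  e500 := by simpa [aProfiles] using aDiag_wall₂ ht n 6
  e410 := by simpa [aProfiles] using aDiag_wall₁ ht n 5 2
  e401 := by
    have h := aDiag_wall₁ ht n 2 5
    norm_num at h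
    rw [← aDiag_rotate n 5 1 2, ← aDiag_rotate (n - 1) 5 1 2, ← aDiag_rotate n 6 1 1,
      ← aDiag_rotate n 4 2 2, ← aDiag_rotate n 5 2 1] at h
    simp only [aProfiles]
    linear_combination h
  e320 := by
    have h := aDiag_wall₁ ht n 4 3
    norm_num at h
    rw [← aDiag_rotate n 4 1 3] at h
    simp only [aProfiles]
    linear_combination h
  e302 := by
    have h := aDiag_wall₁ ht n 3 4
    norm_num at h
    rw [← aDiag_rotate n 4 1 3, ← aDiag_rotate (n - 1) 4 1 3, ← aDiag_rotate n 5 1 2, ←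
        aDiag_rotate n 4 2 2] at h
    simp only [aProfiles]
    linear_combination h
  e311 := by
    have h := aDiag_full ht n 4 2 2
    norm_num at h
    rw [aDiag_rotate n 3 2 3] at h
    simp only [aProfiles]
    linear_combination h
  e221 := by
    have h := aDiag_full ht n 3 3 2
    norm_num at h
    rw [aDiag_rotate n 3 2 3, ← aDiag_rotate n 3 3 2, ← aDiag_rotate n 4 1 3,
      ← aDiag_rotate n 4 2 2] at h
    simp only [aProfiles]
    linear_combination h

end Generic

/-! ### Laurent series and uniqueness of the solution -/

section Laurent

open HahnSeries

/-- `f = O(x^N)`: all coefficients of the Laurent series `f` below degree `N` vanish. -/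
def Small (N : ℤ) (f : LaurentSeries ℚ) : Prop := ∀ j < N, f.coeff j = 0

lemma Small.mono {M N : ℤ} {f : LaurentSeries ℚ} (h : Small N f) (hMN : M ≤ N) : Small M f :=
  fun j hj => h j (hj.trans_le hMN)

lemma small_zero (N : ℤ) : Small N 0 := fun _ _ => rfl

lemma Small.add {N : ℤ} {f g : LaurentSeries ℚ} (hf : Small N f) (hg : Small N g) :
    Small N (f + g) := fun j hj => by simp [hf j hj, hg j hj]

lemma Small.neg {N : ℤ} {f : LaurentSeries ℚ} (hf : Small N f) : Small N (-f) :=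
  fun j hj => by simp [hf j hj]

lemma Small.sub {N : ℤ} {f g : LaurentSeries ℚ} (hf : Small N f) (hg : Small N g) :
    Small N (f - g) := by
  rw [sub_eq_add_neg]
  exact hf.add hg.neg

lemma Small.mul {M N : ℤ} {f g : LaurentSeries ℚ} (hf : Small M f) (hg : Small N g) :
    Small (M + N) (f * g) := fun j hj => by
  rw [coeff_mul]
  refine Finset.sum_eq_zero fun ij hij => ?_
  rw [Finset.mem_antidiagonal] at hij
  rcases lt_or_ge ij.1 M with h | h
  · rw [hf _ h, zero_mul]
  · rw [hg _ (by omega), mul_zero]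

lemma Small.mul_left {N : ℤ} {f g : LaurentSeries ℚ} (hf : Small 0 f) (hg : Small N g) :
    Small N (f * g) := by simpa using hf.mul hg

lemma Small.mul_right {N : ℤ} {f g : LaurentSeries ℚ} (hf : Small N f) (hg : Small 0 g) :
    Small N (f * g) := by simpa using hf.mul hg

lemma small_coe (f : PowerSeries ℚ) : Small 0 (f : LaurentSeries ℚ) := fun j hj => by
  rw [PowerSeries.coeff_coe, if_pos hj]

lemma small_one : Small 0 1 := by simpa using small_coe 1

lemma Small.pow {f : LaurentSeries ℚ} (hf : Small 0 f) (n : ℕ) : Small 0 (f ^ n) := by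
  induction n with
  | zero => simpa using small_one
  | succ n ih => rw [pow_succ]; exact ih.mul_right hf

lemma Small.sum {ι : Type*} {N : ℤ} {s : Finset ι} {f : ι → LaurentSeries ℚ}
    (h : ∀ i ∈ s, Small N (f i)) : Small N (∑ i ∈ s, f i) := by
  classical
  induction s using Finset.induction_on with
  | empty => exact small_zero N
  | insert a s ha ih =>
    rw [Finset.sum_insert ha]
    exact (h a (by simp)).add (ih fun i hi => h i (by simp [hi]))

lemma exists_small (f : LaurentSeries ℚ) : ∃ N : ℕ, Small (-N : ℤ) f :=
  ⟨f.order.natAbs, fun j hj => coeff_eq_zero_of_lt_order (by omega)⟩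

lemma eq_zero_of_small {f : LaurentSeries ℚ} (h : ∀ N : ℕ, Small N f) : f = 0 := by
  ext j
  exact h (j.natAbs + 1) j (by omega)

/-- The variable of `LaurentSeries ℚ`. -/
noncomputable def x : LaurentSeries ℚ := single 1 1

lemma x_zpow (n : ℤ) : x ^ n = single n 1 := (RatFunc.single_zpow n).symm

lemma x_ne_zero : x ≠ 0 := by simp [x]

lemma coe_X : ((PowerSeries.X : PowerSeries ℚ) : LaurentSeries ℚ) = x := ofPowerSeries_X

lemma small_x_zpow {N n : ℤ} (h : N ≤ n) : Small N (x ^ n) := fun j hj => by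
  rw [x_zpow, coeff_single_of_ne (by omega)]

lemma coe_injective : Function.Injective (fun f : PowerSeries ℚ => (f : LaurentSeries ℚ)) :=
  ofPowerSeries_injective

lemma isGeneric_x_pow {r : ℕ} (hr : 0 < r) : IsGeneric (x ^ r) where
  ne_zero := pow_ne_zero _ x_ne_zero
  pow_ne_one j h := by
    rw [← pow_mul, ← zpow_natCast, x_zpow] at h
    have := congrArg (fun f => coeff f 0) h
    rw [coeff_single_of_ne (by positivity)] at this
    simp at this

/-- Each step relation determines the level-`n` family from the level-`(n-1)` family: the
difference of two solutions is divisible by every power of `x`. -/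
lemma Profiles.IsStep.unique {n : ℤ} (hn : 1 ≤ n) {K A K' : Profiles (LaurentSeries ℚ)}
    (hK : K.IsStep (x ^ n) K') (hA : A.IsStep (x ^ n) K') : K = A := by
  obtain ⟨a₁, a₂, a₃, a₄, a₅, a₆, a₇⟩ := K
  obtain ⟨b₁, b₂, b₃, b₄, b₅, b₆, b₇⟩ := A
  obtain ⟨g₁, g₂, g₃, g₄, g₅, g₆, g₇⟩ := hK
  obtain ⟨h₁, h₂, h₃, h₄, h₅, h₆, h₇⟩ := hA
  dsimp only at *
  set y := x ^ n with hy
  have hys : Small 1 y := small_x_zpow hn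
  have hys' : Small 0 y := hys.mono (by norm_num)
  let P : ℤ → Prop := fun N => Small N (a₁ - b₁) ∧ Small N (a₂ - b₂) ∧ Small N (a₃ - b₃) ∧
    Small N (a₄ - b₄) ∧ Small N (a₅ - b₅) ∧ Small N (a₆ - b₆) ∧ Small N (a₇ - b₇)
  have step : ∀ N : ℤ, P N → P (N + 1) := by
    rintro N ⟨d₁, d₂, d₃, d₄, d₅, d₆, d₇⟩
    have key : ∀ {f : LaurentSeries ℚ}, Small N f → Small (N + 1) (y * f) := fun hf => by
      rw [add_comm]; exact hys.mul hf
    refine ⟨?_, ?_, ?_, ?_, ?_, ?_, ?_⟩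
    · rw [show a₁ - b₁ = y * (a₂ - b₂) by linear_combination g₁ - h₁]
      exact key d₂
    · rw [show a₂ - b₂ = y * (a₄ - b₄ + (a₃ - b₃) - y * (a₆ - b₆)) by
        linear_combination g₂ - h₂]
      exact key ((d₄.add d₃).sub (hys'.mul_left d₆))
    · rw [show a₃ - b₃ = y * (a₆ - b₆ + (a₁ - b₁) - y * (a₂ - b₂)) by
        linear_combination g₃ - h₃]
      exact key ((d₆.add d₁).sub (hys'.mul_left d₂))
    · rw [show a₄ - b₄ = y * (a₅ - b₅ + (a₆ - b₆) - y * (a₇ - b₇)) by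
        linear_combination g₄ - h₄]
      exact key ((d₅.add d₆).sub (hys'.mul_left d₇))
    · rw [show a₅ - b₅ = y * (a₇ - b₇ + (a₃ - b₃) - y * (a₆ - b₆)) by
        linear_combination g₅ - h₅]
      exact key ((d₇.add d₃).sub (hys'.mul_left d₆))
    · rw [show a₆ - b₆ = y * (a₇ - b₇ + (a₅ - b₅) + (a₂ - b₂)
          - y * (a₇ - b₇ + (a₄ - b₄) + (a₃ - b₃) - y * (a₆ - b₆))) by
        linear_combination g₆ - h₆]
      exact key (((d₇.add d₅).add d₂).sub
        (hys'.mul_left (((d₇.add d₄).add d₃).sub (hys'.mul_left d₆))))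
    · rw [show a₇ - b₇ = y * (a₆ - b₆ + (a₇ - b₇) + (a₄ - b₄)
          - y * (a₇ - b₇ + (a₅ - b₅) + (a₆ - b₆) - y * (a₇ - b₇))) by
        linear_combination g₇ - h₇]
      exact key (((d₆.add d₇).add d₄).sub
        (hys'.mul_left (((d₇.add d₅).add d₆).sub (hys'.mul_left d₇))))
  obtain ⟨N₁, e₁⟩ := exists_small (a₁ - b₁)
  obtain ⟨N₂, e₂⟩ := exists_small (a₂ - b₂)
  obtain ⟨N₃, e₃⟩ := exists_small (a₃ - b₃)
  obtain ⟨N₄, e₄⟩ := exists_small (a₄ - b₄)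
  obtain ⟨N₅, e₅⟩ := exists_small (a₅ - b₅)
  obtain ⟨N₆, e₆⟩ := exists_small (a₆ - b₆)
  obtain ⟨N₇, e₇⟩ := exists_small (a₇ - b₇)
  have all : ∀ m : ℕ, P (m - (N₁ + N₂ + N₃ + N₄ + N₅ + N₆ + N₇)) := by
    intro m
    induction m with
    | zero =>
      exact ⟨e₁.mono (by omega), e₂.mono (by omega), e₃.mono (by omega), e₄.mono (by omega),
        e₅.mono (by omega), e₆.mono (by omega), e₇.mono (by omega)⟩
    | succ m ih =>
      convert step _ ih using 1
      push_cast
      ring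
  have fin : ∀ N : ℕ, P N := fun N => by
    simpa using all (N + (N₁ + N₂ + N₃ + N₄ + N₅ + N₆ + N₇))
  rw [Profiles.mk.injEq]
  refine ⟨?_, ?_, ?_, ?_, ?_, ?_, ?_⟩ <;> refine sub_eq_zero.mp (eq_zero_of_small fun N => ?_)
  exacts [(fin N).1, (fin N).2.1, (fin N).2.2.1, (fin N).2.2.2.1, (fin N).2.2.2.2.1,
    (fin N).2.2.2.2.2.1, (fin N).2.2.2.2.2.2]

/-- Both families start from the constant family `1` at level `0` and solve the same system. -/
lemma gProfiles_eq_aProfiles (n : ℕ) : gProfiles x n = aProfiles x n := by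
  have hx : IsGeneric x := by simpa using isGeneric_x_pow one_pos
  induction n with
  | zero => simp [gProfiles, aProfiles, gSum_zero, aDiag, aSum_zero]
  | succ n ih =>
    have hg := gProfiles_isStep hx (n + 1)
    have ha := aProfiles_isStep hx (n + 1)
    rw [add_sub_cancel_right] at hg ha
    rw [ih] at hg
    rw [Nat.cast_succ]
    exact hg.unique (by omega) ha

/-- The sum side at level `n` equals the alternating sum at level `n`. -/
lemma gSum_eq_aDiag (n : ℕ) : gSum x n 0 0 1 0 = aDiag x n 4 2 2 :=
  congrArg Profiles.p311 (gProfiles_eq_aProfiles n)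

end Laurent

/-! ### The limit of large level -/

section Asymptotics

open HahnSeries

/-- `(x^r; x^r)_n` as a power series. -/
noncomputable def poch (r n : ℕ) : PowerSeries ℚ :=
  ∏ i ∈ Finset.range n, (1 - (PowerSeries.X ^ r) ^ (i + 1))

lemma coe_poch (r n : ℕ) : (poch r n : LaurentSeries ℚ) = V (x ^ r) n := by
  simp [poch, V_natCast, map_prod, x]

lemma constantCoeff_poch {r : ℕ} (hr : 0 < r) (n : ℕ) :
    PowerSeries.constantCoeff (poch r n) = 1 := by
  rw [poch, map_prod]
  exact Finset.prod_eq_one fun i _ => by simp [hr.ne']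

lemma coe_inv {f : PowerSeries ℚ} (h : PowerSeries.constantCoeff f ≠ 0) :
    ((f⁻¹ : PowerSeries ℚ) : LaurentSeries ℚ) = (f : LaurentSeries ℚ)⁻¹ := by
  refine eq_inv_of_mul_eq_one_left ?_
  rw [← map_mul, PowerSeries.inv_mul_cancel f h, map_one]

lemma coe_poch_inv {r : ℕ} (hr : 0 < r) (n : ℕ) :
    (((poch r n)⁻¹ : PowerSeries ℚ) : LaurentSeries ℚ) = U (x ^ r) n := by
  rw [coe_inv (by simp [constantCoeff_poch hr]), coe_poch, U]

lemma small_V (r : ℕ) (k : ℤ) : Small 0 (V (x ^ r) k) := by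
  rcases lt_or_ge k 0 with h | h
  · rw [V_neg h]
    exact small_zero 0
  · lift k to ℕ using h
    rw [← coe_poch]
    exact small_coe _

lemma small_U {r : ℕ} (hr : 0 < r) (k : ℤ) : Small 0 (U (x ^ r) k) := by
  rcases lt_or_ge k 0 with h | h
  · rw [U_neg h]
    exact small_zero 0
  · lift k to ℕ using h
    rw [← coe_poch_inv hr]
    exact small_coe _

lemma small_V_add_sub {r : ℕ} (hr : 0 < r) (m k : ℕ) :
    Small m (V (x ^ r) (m + k : ℕ) - V (x ^ r) m) := by
  induction k with
  | zero => simpa using small_zero _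
  | succ k ih =>
    have h := V_rec (t := x ^ r) (k := (m + (k + 1) : ℕ)) (by omega)
    rw [show (((m + (k + 1) : ℕ) : ℤ) - 1) = (m + k : ℕ) by push_cast; ring] at h
    rw [h, show V (x ^ r) (m + k : ℕ) * (1 - (x ^ r) ^ ((m + (k + 1) : ℕ) : ℤ)) - V (x ^ r) m
      = (V (x ^ r) (m + k : ℕ) - V (x ^ r) m)
        - V (x ^ r) (m + k : ℕ) * (x ^ r) ^ ((m + (k + 1) : ℕ) : ℤ) by ring]
    refine ih.sub ((small_V r _).mul_left ?_)
    rw [zpow_natCast, ← pow_mul, ← zpow_natCast]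
    refine small_x_zpow ?_
    push_cast
    nlinarith

/-- `(x^r; x^r)_n / (x^r; x^r)_m = 1 + O(x^N)` as soon as `m, n ≥ N`. -/
lemma small_V_mul_U {r N : ℕ} (hr : 0 < r) {n m : ℤ} (hn : N ≤ n) (hm : N ≤ m) :
    Small N (V (x ^ r) n * U (x ^ r) m - 1) := by
  have key : ∀ k : ℤ, N ≤ k → Small N (V (x ^ r) k - V (x ^ r) N) := by
    intro k hk
    obtain ⟨j, rfl⟩ : ∃ j : ℕ, k = (N + j : ℕ) := ⟨(k - N).toNat, by omega⟩
    exact small_V_add_sub hr N j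
  have h1 : V (x ^ r) m * U (x ^ r) m = 1 :=
    mul_inv_cancel₀ ((isGeneric_x_pow hr).V_ne_zero (by omega))
  rw [show V (x ^ r) n * U (x ^ r) m - 1
    = ((V (x ^ r) n - V (x ^ r) N) - (V (x ^ r) m - V (x ^ r) N)) * U (x ^ r) m by
      linear_combination h1]
  exact ((key n hn).sub (key m hm)).mul_right (small_U hr m)

/-- A finitely supported sum agrees modulo `x^N` with the sum of `g` over `B`, if the terms outside
`B` are negligible and those inside are close to `g`. -/
lemma small_finsum_sub_sum {ι : Type*} {N : ℤ} {f g : ι → LaurentSeries ℚ}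
    (hf : f.HasFiniteSupport) (B : Finset ι) (h₁ : ∀ i ∉ B, Small N (f i))
    (h₂ : ∀ i ∈ B, Small N (f i - g i)) : Small N (∑ᶠ i, f i - ∑ i ∈ B, g i) := by
  classical
  rw [finsum_eq_sum_of_support_subset (s := B ∪ hf.toFinset) f (by
      intro i hi
      rw [Finset.mem_coe, Finset.mem_union]
      exact Or.inr ((Set.Finite.mem_toFinset (show (Function.support f).Finite from hf)).mpr hi)),
    ← Finset.sum_sdiff Finset.subset_union_left, add_sub_assoc, ← Finset.sum_sub_distrib]
  exact (Small.sum fun i hi => h₁ i (Finset.mem_sdiff.mp hi).2).add (Small.sum h₂)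

/-- The summand of the quadruple sum without the truncating factor `U x (n - n₁)`, that is, the
summand of the identity itself. -/
noncomputable def limTerm (y : ℤ × ℤ × ℤ × ℤ) : LaurentSeries ℚ :=
  x ^ (y.1 ^ 2 + y.2.1 ^ 2 + y.2.2.1 ^ 2 + y.2.2.2 ^ 2 + y.2.2.1 + y.2.1 * y.2.2.2 - y.1 * y.2.1)
    * (V x y.1 * U x (y.1 - y.2.1) * U x y.2.2.2 * U x (y.1 - y.2.2.2) * U x y.2.2.1
      * U x (y.2.1 - y.2.2.1))

lemma sumTerm_eq_limTerm (n : ℤ) (y : ℤ × ℤ × ℤ × ℤ) :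
    sumTerm x n 0 0 1 0 y = U x (n - y.1) * limTerm y := by
  rw [sumTerm, limTerm, show y.1 ^ 2 + y.2.1 ^ 2 + y.2.2.1 ^ 2 + y.2.2.2 ^ 2 - y.1 * y.2.1
      + y.2.1 * y.2.2.2 + (0 * y.1 + 0 * y.2.1 + 1 * y.2.2.1 + 0 * y.2.2.2)
    = y.1 ^ 2 + y.2.1 ^ 2 + y.2.2.1 ^ 2 + y.2.2.2 ^ 2 + y.2.2.1 + y.2.1 * y.2.2.2 - y.1 * y.2.1
    by ring]
  ring

/-- The exponent of the summand is at least `n₁` (when `n₁ ≥ 0`), by completing squares: for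
`u = 2 d + b` and `v = 3 b - 2 a`, four times `a² + b² + d² - a b + b d` is
`u² + v² / 3 + 8 a² / 3`. -/
lemma small_limTerm (y : ℤ × ℤ × ℤ × ℤ) : Small y.1 (limTerm y) := by
  obtain ⟨a, b, c, d⟩ := y
  have hU : ∀ k, Small 0 (U x k) := by simpa using small_U one_pos
  rcases lt_or_ge a 0 with ha | ha
  · rw [limTerm, V_neg ha]
    simpa using small_zero a
  · refine Small.mul_right (small_x_zpow ?_) ?_
    · dsimp only
      have hc : 0 ≤ c ^ 2 + c := by nlinarith [sq_nonneg (2 * c + 1), mul_self_nonneg c]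
      rcases lt_or_ge a 2 with h | h
      · interval_cases a <;> nlinarith [sq_nonneg (2 * d + b), sq_nonneg (3 * b - 2)]
      · nlinarith [sq_nonneg (2 * d + b), sq_nonneg (3 * b - 2 * a)]
    · have hV : Small 0 (V x a) := by simpa using small_V 1 a
      exact ((((hV.mul_right (hU _)).mul_right (hU _)).mul_right (hU _)).mul_right (hU _)).mul_right
        (hU _)

/-- The box `{0, …, N-1}⁴`. -/
def box (N : ℕ) : Finset (ℕ × ℕ × ℕ × ℕ) :=
  Finset.range N ×ˢ Finset.range N ×ˢ Finset.range N ×ˢ Finset.range N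

lemma mem_box {N : ℕ} {y : ℕ × ℕ × ℕ × ℕ} :
    y ∈ box N ↔ y.1 < N ∧ y.2.1 < N ∧ y.2.2.1 < N ∧ y.2.2.2 < N := by simp [box]

/-- The inclusion of quadruples of natural numbers into quadruples of integers. -/
def castQuad : ℕ × ℕ × ℕ × ℕ ↪ ℤ × ℤ × ℤ × ℤ where
  toFun y := (y.1, y.2.1, y.2.2.1, y.2.2.2)
  inj' y z h := by
    simp only [Prod.mk.injEq, Nat.cast_inj] at h
    ext <;> tauto

/-- At large level `(x;x)_n` times the finite quadruple sum approximates the infinite one. -/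
lemma small_gSum (N n : ℕ) (hn : 2 * N ≤ n) :
    Small N (V x n * gSum x n 0 0 1 0 - ∑ y ∈ box N, limTerm (castQuad y)) := by
  rw [← Finset.sum_map (box N) castQuad limTerm, gSum, mul_finsum]
  have hV : Small 0 (V x n) := by simpa using small_V 1 n
  have hU : ∀ k, Small 0 (U x k) := by simpa using small_U one_pos
  refine small_finsum_sub_sum ((sumTerm_support_finite (t := x) n 0 0 1 0).subset
    fun y hy => right_ne_zero_of_mul hy) _ ?_ ?_
  · rintro ⟨a, b, c, d⟩ hy
    by_cases h : 0 ≤ c ∧ c ≤ b ∧ b ≤ a ∧ a ≤ n ∧ 0 ≤ d ∧ d ≤ a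
    · have hNa : N ≤ a := by
        by_contra hlt
        refine hy (Finset.mem_map.mpr ⟨(a.toNat, b.toNat, c.toNat, d.toNat), ?_, ?_⟩)
        · rw [mem_box]
          dsimp only
          omega
        · change ((_ : ℤ), (_ : ℤ), (_ : ℤ), (_ : ℤ)) = _
          simp only [Prod.mk.injEq]
          omega
      rw [sumTerm_eq_limTerm]
      exact hV.mul_left ((hU _).mul_left ((small_limTerm _).mono hNa))
    · rw [sumTerm_eq_zero h, mul_zero]
      exact small_zero _
  · intro y hy
    obtain ⟨z, hz, rfl⟩ := Finset.mem_map.mp hy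
    rw [sumTerm_eq_limTerm, ← mul_assoc, ← sub_one_mul]
    rw [mem_box] at hz
    refine Small.mul_right ?_ ((small_limTerm _).mono (Nat.cast_nonneg _))
    have h := small_V_mul_U (r := 1) (N := N) one_pos (n := n) (m := n - z.1) (by omega) (by omega)
    rw [pow_one] at h
    exact h

/-- The exponent of the positive terms for `t = x` and weights `(4, 2, 2)`, equal to that for
`t = x ^ 2` and weights `(2, 1, 1)`. -/
def posExp (y : ℤ × ℤ) : ℤ :=
  8 * (y.1 ^ 2 + y.1 * (3 * y.2 - 1) + y.2 * (3 * y.2 - 1)) + 2 * y.1 + 2 * (2 * y.1 + 3 * y.2)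

/-- The exponent of the negative terms, as in `posExp`. -/
def negExp (y : ℤ × ℤ) : ℤ :=
  8 * (y.1 ^ 2 + 3 * y.1 * y.2 + y.2 * (3 * y.2 + 1)) + 2 * y.1 + 2 * (2 * y.1 + 3 * y.2 + 1)

/-- The square of pairs of integers of absolute value at most `N + 1`. -/
noncomputable def square (N : ℕ) : Finset (ℤ × ℤ) :=
  Finset.Icc (-(N + 1) : ℤ) (N + 1) ×ˢ Finset.Icc (-(N + 1) : ℤ) (N + 1)

lemma mem_square {N : ℕ} {p k : ℤ} : (p, k) ∈ square N ↔
    (-(N + 1) ≤ p ∧ p ≤ N + 1) ∧ (-(N + 1) ≤ k ∧ k ≤ N + 1) := by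
  simp only [square, Finset.mem_product, Finset.mem_Icc]

lemma posExp_bounds (p k : ℤ) : 2 * |p| ≤ posExp (p, k) ∧ |k| ≤ posExp (p, k) := by
  obtain ⟨u, hu⟩ : ∃ u, u = 2 * p + 3 * k := ⟨_, rfl⟩
  have h1 : posExp (p, k) = 2 * u ^ 2 - u + (6 * k ^ 2 + k) := by
    rw [posExp, hu]
    ring
  have h2 : |u| ≤ 2 * u ^ 2 - u := by
    rcases lt_trichotomy u 0 with h | h | h
    · rw [abs_of_neg h]; nlinarith
    · simp [h]
    · rw [abs_of_pos h]; nlinarith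
  have h3 : 5 * |k| ≤ 6 * k ^ 2 + k := by
    rcases lt_trichotomy k 0 with h | h | h
    · rw [abs_of_neg h]; nlinarith
    · simp [h]
    · rw [abs_of_pos h]; nlinarith
  grind

lemma negExp_bounds (p k : ℤ) : 0 ≤ negExp (p, k) ∧ 2 * |p| ≤ negExp (p, k) + 2
    ∧ |k| ≤ negExp (p, k) + 2 := by
  obtain ⟨u, hu⟩ : ∃ u, u = 2 * p + 3 * k := ⟨_, rfl⟩
  have h1 : negExp (p, k) = 2 * u ^ 2 + 3 * u + (6 * k ^ 2 + 5 * k) + 2 := by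
    rw [negExp, hu]
    ring
  have h2 : |u| - 2 ≤ 2 * u ^ 2 + 3 * u ∧ -1 ≤ 2 * u ^ 2 + 3 * u := by
    rcases lt_trichotomy u 0 with h | h | h
    · rw [abs_of_neg h]; constructor <;> nlinarith
    · simp [h]
    · rw [abs_of_pos h]; constructor <;> nlinarith
  have h3 : 3 * |k| - 2 ≤ 6 * k ^ 2 + 5 * k ∧ -1 ≤ 6 * k ^ 2 + 5 * k := by
    rcases lt_trichotomy k 0 with h | h | h
    · rw [abs_of_neg h]; constructor <;> nlinarith
    · simp [h]
    · rw [abs_of_pos h]; constructor <;> nlinarith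
  grind

/-- The theta series of the alternating side, truncated to the terms that matter modulo `x^N`. -/
noncomputable def theta (N : ℕ) : LaurentSeries ℚ :=
  ∑ y ∈ square N, x ^ posExp y - ∑ y ∈ square N, x ^ negExp y

lemma small_triple {r N : ℕ} (hr : 0 < r) {n m₁ m₂ m₃ : ℤ} (hn : N ≤ n) (h₁ : N ≤ n + m₁)
    (h₂ : N ≤ n + m₂) (h₃ : N ≤ n + m₃) :
    Small N (V (x ^ r) n ^ 3
      * (U (x ^ r) (n + m₁) * U (x ^ r) (n + m₂) * U (x ^ r) (n + m₃)) - 1) := by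
  have i : ∀ k, Small 0 (V (x ^ r) n * U (x ^ r) k) :=
    fun k => (small_V r n).mul_right (small_U hr k)
  rw [show V (x ^ r) n ^ 3 * (U (x ^ r) (n + m₁) * U (x ^ r) (n + m₂) * U (x ^ r) (n + m₃)) - 1
    = (V (x ^ r) n * U (x ^ r) (n + m₁) - 1)
        * ((V (x ^ r) n * U (x ^ r) (n + m₂)) * (V (x ^ r) n * U (x ^ r) (n + m₃)))
      + (V (x ^ r) n * U (x ^ r) (n + m₂) - 1) * (V (x ^ r) n * U (x ^ r) (n + m₃))
      + (V (x ^ r) n * U (x ^ r) (n + m₃) - 1) by ring]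
  exact (((small_V_mul_U hr hn h₁).mul_right ((i _).mul_right (i _))).add
    ((small_V_mul_U hr hn h₂).mul_right (i _))).add (small_V_mul_U hr hn h₃)

/-- The limit of the alternating sum. The hypotheses cover both `r = 1` with weights `(4, 2, 2)`
and `r = 2` with weights `(2, 1, 1)`, and the limit is the same. -/
lemma small_aDiag {r : ℕ} (hr : 0 < r) {d₁ d₂ d₃ : ℤ} (hd : r * (d₁ + d₂ + d₃) = 8)
    (hd₂ : r * d₂ = 2) (hd₃ : r * d₃ = 2) (N n : ℕ) (hn : 10 * N + 10 ≤ n) :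
    Small N (V (x ^ r) n ^ 3 * aDiag (x ^ r) n d₁ d₂ d₃ - theta N) := by
  have hpow : ∀ e : ℤ, (x ^ r) ^ e = x ^ (r * e) := fun e => by
    rw [zpow_mul, zpow_natCast]
  have hV3 : Small 0 (V (x ^ r) n ^ 3) := (small_V r n).pow 3
  have hpos : ∀ y, V (x ^ r) n ^ 3 * posTerm (x ^ r) n n n d₁ d₂ d₃ y
      = x ^ posExp y * (V (x ^ r) n ^ 3 * (U (x ^ r) (n + y.1) * U (x ^ r) (n + (y.1 + 3 * y.2))
        * U (x ^ r) (n + (-2 * y.1 - 3 * y.2)))) := fun y => by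
    rw [posTerm, hpow, show r * ((d₁ + d₂ + d₃)
        * (y.1 ^ 2 + y.1 * (3 * y.2 - 1) + y.2 * (3 * y.2 - 1)) + d₂ * y.1
        + d₃ * (2 * y.1 + 3 * y.2)) = posExp y by
      rw [posExp]
      linear_combination (y.1 ^ 2 + y.1 * (3 * y.2 - 1) + y.2 * (3 * y.2 - 1)) * hd + y.1 * hd₂
        + (2 * y.1 + 3 * y.2) * hd₃]
    ring
  have hneg : ∀ y, V (x ^ r) n ^ 3 * negTerm (x ^ r) n n n d₁ d₂ d₃ y
      = x ^ negExp y * (V (x ^ r) n ^ 3 * (U (x ^ r) (n + y.1)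
        * U (x ^ r) (n + (y.1 + 3 * y.2 + 1)) * U (x ^ r) (n + (-2 * y.1 - 3 * y.2 - 1)))) :=
    fun y => by
    rw [negTerm, hpow, show r * ((d₁ + d₂ + d₃)
        * (y.1 ^ 2 + 3 * y.1 * y.2 + y.2 * (3 * y.2 + 1)) + d₂ * y.1
        + d₃ * (2 * y.1 + 3 * y.2 + 1)) = negExp y by
      rw [negExp]
      linear_combination (y.1 ^ 2 + 3 * y.1 * y.2 + y.2 * (3 * y.2 + 1)) * hd + y.1 * hd₂
        + (2 * y.1 + 3 * y.2 + 1) * hd₃]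
    ring
  have hU3 : ∀ i j k, Small 0 (U (x ^ r) i * U (x ^ r) j * U (x ^ r) k) := fun i j k =>
    ((small_U hr i).mul_right (small_U hr j)).mul_right (small_U hr k)
  have small_outside : ∀ (e i j k : ℤ), N ≤ e → Small N (x ^ e * (V (x ^ r) n ^ 3
      * (U (x ^ r) i * U (x ^ r) j * U (x ^ r) k))) := fun e i j k h =>
    (small_x_zpow h).mul_right (hV3.mul_right (hU3 i j k))
  have h₁ : Small N (∑ᶠ y, V (x ^ r) n ^ 3 * posTerm (x ^ r) n n n d₁ d₂ d₃ y
      - ∑ y ∈ square N, x ^ posExp y) := by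
    refine small_finsum_sub_sum ((posTerm_support_finite (t := x ^ r) n n n d₁ d₂ d₃).subset
      fun y hy => right_ne_zero_of_mul hy) _ ?_ ?_
    · rintro ⟨p, k⟩ hy
      have hb := posExp_bounds p k
      rw [mem_square] at hy
      rw [hpos]
      exact small_outside _ _ _ _ (by grind)
    · rintro ⟨p, k⟩ hy
      have hb := posExp_bounds p k
      rw [mem_square] at hy
      rw [hpos, ← mul_sub_one]
      refine (small_x_zpow (N := 0) (by grind)).mul_left (small_triple hr ?_ ?_ ?_ ?_) <;>
        omega
  have h₂ : Small N (∑ᶠ y, V (x ^ r) n ^ 3 * negTerm (x ^ r) n n n d₁ d₂ d₃ y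
      - ∑ y ∈ square N, x ^ negExp y) := by
    refine small_finsum_sub_sum ((negTerm_support_finite (t := x ^ r) n n n d₁ d₂ d₃).subset
      fun y hy => right_ne_zero_of_mul hy) _ ?_ ?_
    · rintro ⟨p, k⟩ hy
      have hb := negExp_bounds p k
      rw [mem_square] at hy
      rw [hneg]
      exact small_outside _ _ _ _ (by grind)
    · rintro ⟨p, k⟩ hy
      have hb := negExp_bounds p k
      rw [mem_square] at hy
      rw [hneg, ← mul_sub_one]
      refine (small_x_zpow (N := 0) hb.1).mul_left (small_triple hr ?_ ?_ ?_ ?_) <;>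
        omega
  rw [aDiag, aSum, theta, mul_sub, mul_finsum, mul_finsum, sub_sub_sub_comm]
  exact h₁.sub h₂

lemma coe_mem_small_iff {N : ℕ} {f : PowerSeries ℚ} :
    Small N (f : LaurentSeries ℚ) ↔ PowerSeries.X ^ N ∣ f := by
  rw [PowerSeries.X_pow_dvd_iff]
  refine ⟨fun h m hm => ?_, fun h j hj => ?_⟩
  · rw [← LaurentSeries.coeff_coe_powerSeries]
    exact h m (by exact_mod_cast hm)
  · rcases lt_or_ge j 0 with h0 | h0
    · exact small_coe f j h0
    · lift j to ℕ using h0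
      rw [LaurentSeries.coeff_coe_powerSeries]
      exact h j (by exact_mod_cast hj)

/-- If `S` is the quadruple sum modulo `q^N`, then `(q;q)_n ^ 2 * S ≡ (q²;q²)_n ^ 2`. The two
evaluations `(q;q)_n ^ 3 * aDiag ≡ theta` for `t = q` and `t = q²` are compared; in the second one
`aDiag` is `1 / (q²;q²)_n`. -/
lemma dvd_main (N n : ℕ) (hn : 10 * N + 10 ≤ n) {S : PowerSeries ℚ}
    (hS : Small N (∑ y ∈ box N, limTerm (castQuad y) - (S : LaurentSeries ℚ))) :
    PowerSeries.X ^ N ∣ poch 1 n ^ 2 * S - poch 2 n ^ 2 := by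
  rw [← coe_mem_small_iff]
  have h₁ := small_gSum N n (by omega)
  have h₂ := small_aDiag (r := 1) one_pos (d₁ := 4) (d₂ := 2) (d₃ := 2) (by norm_num)
    (by norm_num) (by norm_num) N n hn
  have h₃ := small_aDiag (r := 2) two_pos (d₁ := 2) (d₂ := 1) (d₃ := 1) (by norm_num)
    (by norm_num) (by norm_num) N n hn
  rw [aDiag_level_one (isGeneric_x_pow two_pos)] at h₃
  rw [pow_one] at h₂
  rw [gSum_eq_aDiag] at h₁
  have hU : V (x ^ 2) n * U (x ^ 2) n = 1 :=
    mul_inv_cancel₀ ((isGeneric_x_pow two_pos).V_ne_zero (by omega))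
  rw [map_sub, map_mul, map_pow, map_pow, coe_poch, coe_poch, pow_one]
  have hV : Small 0 (V x n ^ 2) := by simpa using (small_V 1 n).pow 2
  have := ((hV.mul_left (h₁.add hS)).neg.add h₂).sub h₃
  convert this using 1
  linear_combination V (x ^ 2) n ^ 2 * hU

end Asymptotics

/-! ### Convergence and the infinite product -/

section Conclusion

open Filter Topology

/-- The summand of the identity. -/
noncomputable def term (n : ℕ × ℕ × ℕ × ℕ) : PowerSeries ℚ :=
  (fun n₁ n₂ n₃ n₄ : ℕ =>
    q ^ (n₁ ^ 2 + n₂ ^ 2 + n₃ ^ 2 + n₄ ^ 2 + (n₃) + n₂ * n₄ - n₁ * n₂)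
      * (1) * (qPoch n₁)⁻¹ * qBinom n₁ n₂ * qBinom n₁ n₄ * qBinom n₂ n₃)
  n.1 n.2.1 n.2.2.1 n.2.2.2

/-- The `k`-th factor of the infinite product. -/
noncomputable def factor (k : ℕ) : PowerSeries ℚ :=
  (1 - q ^ (8*k+1))^2 * (1 - q ^ (8*k+3))^2 * (1 - q ^ (8*k+5))^2 * (1 - q ^ (8*k+7))^2

lemma qPoch_eq (n : ℕ) : qPoch n = poch 1 n := by simp [qPoch, poch, q]

lemma coe_qPoch (n : ℕ) : (qPoch n : LaurentSeries ℚ) = V x n := by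
  rw [qPoch_eq, coe_poch, pow_one]

lemma coe_qPoch_inv (n : ℕ) : ((qPoch n)⁻¹ : PowerSeries ℚ) = U x n := by
  rw [qPoch_eq, coe_poch_inv one_pos, pow_one]

lemma coe_qBinom (m k : ℕ) : (qBinom m k : LaurentSeries ℚ) = V x m * (U x k * U x (m - k)) := by
  rw [qBinom]
  split_ifs with h
  · have hc : ∀ n, PowerSeries.constantCoeff (qPoch n) = 1 := fun n => by
      rw [qPoch_eq, constantCoeff_poch one_pos]
    rw [map_mul, coe_inv (by simp [hc]), map_mul, coe_qPoch, coe_qPoch, coe_qPoch, mul_inv, U, U,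
      Nat.cast_sub h]
  · rw [U_neg (show (m : ℤ) - k < 0 by omega), map_zero, mul_zero, mul_zero]

lemma coe_term (n : ℕ × ℕ × ℕ × ℕ) : (term n : LaurentSeries ℚ) = limTerm (castQuad n) := by
  obtain ⟨a, b, c, d⟩ := n
  have hx : IsGeneric x := by simpa using isGeneric_x_pow one_pos
  have ha : V x a * U x a = 1 := mul_inv_cancel₀ (hx.V_ne_zero (by omega))
  have hb : V x b * U x b = 1 := mul_inv_cancel₀ (hx.V_ne_zero (by omega))
  have hle : a * b ≤ a ^ 2 + b ^ 2 + c ^ 2 + d ^ 2 + c + b * d := by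
    nlinarith [sq_nonneg ((a : ℤ) - b)]
  change _ = limTerm ((a : ℤ), (b : ℤ), (c : ℤ), (d : ℤ))
  rw [limTerm, term]
  dsimp only
  rw [mul_one, map_mul, map_mul, map_mul, map_mul, coe_qBinom, coe_qBinom, coe_qBinom,
    coe_qPoch_inv, map_pow, q, coe_X, ← zpow_natCast, Nat.cast_sub hle]
  push_cast
  linear_combination (x ^ ((a : ℤ) ^ 2 + b ^ 2 + c ^ 2 + d ^ 2 + c + b * d - a * b)
    * U x (a - b) * U x d * U x (a - d) * U x c * U x (b - c)) * V x a
    * (V x b * U x b * ha + hb)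

lemma dvd_term {M : ℕ} {y : ℕ × ℕ × ℕ × ℕ} (hy : y ∉ box M) : PowerSeries.X ^ M ∣ term y := by
  rw [← coe_mem_small_iff, coe_term]
  obtain ⟨a, b, c, d⟩ := y
  rw [mem_box] at hy
  change Small M (limTerm ((a : ℤ), (b : ℤ), (c : ℤ), (d : ℤ)))
  rcases le_or_gt M a with h | h
  · exact (small_limTerm _).mono (Nat.cast_le.mpr h)
  have hU : (a : ℤ) - b < 0 ∨ (a : ℤ) - d < 0 ∨ (b : ℤ) - c < 0 := by
    dsimp only at hy
    omega
  rw [limTerm]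
  rcases hU with h | h | h <;> simp [U_neg h, small_zero]

/-- The value of the quadruple sum: the coefficient of `q ^ j` only involves indices at most `j`. -/
noncomputable def total : PowerSeries ℚ :=
  PowerSeries.mk fun j => ∑ y ∈ box (j + 1), PowerSeries.coeff j (term y)

lemma dvd_sum_term_sub_total {N : ℕ} {s : Finset (ℕ × ℕ × ℕ × ℕ)} (hs : box N ⊆ s) :
    PowerSeries.X ^ N ∣ ∑ y ∈ s, term y - total := by
  rw [PowerSeries.X_pow_dvd_iff]
  intro j hj
  rw [map_sub, map_sum, total, PowerSeries.coeff_mk, sub_eq_zero]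
  refine (Finset.sum_subset (fun y hy => hs ?_) fun y _ hy => ?_).symm
  · rw [mem_box] at hy ⊢
    omega
  · exact PowerSeries.X_pow_dvd_iff.mp (dvd_term hy) j (Nat.lt_succ_self j)

lemma poch_succ (r n : ℕ) :
    poch r (n + 1) = poch r n * (1 - (PowerSeries.X ^ r) ^ (n + 1)) := Finset.prod_range_succ ..

/-- The quotient `(q;q)_{8m} / (q²;q²)_{4m}` consists of the factors with odd exponent, grouped by
residues modulo `8`. -/
lemma poch_one_eight_mul (m : ℕ) :
    poch 1 (8 * m) ^ 2 = poch 2 (4 * m) ^ 2 * ∏ k ∈ Finset.range m, factor k := by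
  induction m with
  | zero => simp [poch]
  | succ m ih =>
    have e : ∀ i, (PowerSeries.X ^ 2 : PowerSeries ℚ) ^ (4 * m + i)
        = PowerSeries.X ^ (8 * m + 2 * i) := fun i => by
      rw [← pow_mul]
      ring_nf
    rw [Finset.prod_range_succ, factor, q,
      show 8 * (m + 1) = 8 * m + 1 + 1 + 1 + 1 + 1 + 1 + 1 + 1 by ring,
      show 4 * (m + 1) = 4 * m + 1 + 1 + 1 + 1 by ring]
    simp only [poch_succ, pow_one]
    simp only [add_assoc, Nat.reduceAdd, e, Nat.reduceMul]
    linear_combination ((1 - PowerSeries.X ^ (8 * m + 1)) * (1 - PowerSeries.X ^ (8 * m + 2))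
      * (1 - PowerSeries.X ^ (8 * m + 3)) * (1 - PowerSeries.X ^ (8 * m + 4))
      * (1 - PowerSeries.X ^ (8 * m + 5)) * (1 - PowerSeries.X ^ (8 * m + 6))
      * (1 - PowerSeries.X ^ (8 * m + 7)) * (1 - PowerSeries.X ^ (8 * m + 8))) ^ 2 * ih

lemma poch_dvd {r : ℕ} (hr : 0 < r) (N m k : ℕ) (hm : N ≤ m) :
    PowerSeries.X ^ N ∣ poch r (m + k) - poch r m := by
  rw [← coe_mem_small_iff, map_sub, coe_poch, coe_poch]
  exact (small_V_add_sub hr m k).mono (by exact_mod_cast hm)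

lemma dvd_prod_factor_mul_total (N m : ℕ) (hm : 2 * N + 2 ≤ m) :
    PowerSeries.X ^ N ∣ (∏ k ∈ Finset.range m, factor k) * total - 1 := by
  have h₁ := dvd_main N (8 * m) (by omega) (S := total) (by
    have := coe_mem_small_iff.mpr (dvd_sum_term_sub_total (Finset.Subset.refl (box N)))
    simpa only [map_sub, map_sum, coe_term] using this)
  have h₂ := poch_dvd two_pos N (4 * m) (4 * m) (by omega)
  rw [show 4 * m + 4 * m = 8 * m by ring] at h₂
  rw [poch_one_eight_mul] at h₁
  have h₃ : PowerSeries.X ^ N ∣ poch 2 (4 * m) ^ 2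
      * ((∏ k ∈ Finset.range m, factor k) * total - 1) := by
    convert dvd_add h₁ (h₂.mul_right (poch 2 (8 * m) + poch 2 (4 * m))) using 1
    ring
  refine (IsUnit.dvd_mul_left ?_).mp h₃
  rw [PowerSeries.isUnit_iff_constantCoeff, map_pow, constantCoeff_poch two_pos]
  simp

/-- Convergence in the product topology of the coefficients follows from `X`-adic convergence. -/
lemma tendsto_of_dvd {ι : Type*} {l : Filter ι} {f : ι → PowerSeries ℚ} {a : PowerSeries ℚ}
    (h : ∀ N : ℕ, ∀ᶠ i in l, PowerSeries.X ^ N ∣ f i - a) : Tendsto f l (𝓝 a) := by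
  refine (tendsto_pi_nhds (A := fun _ : Unit →₀ ℕ => ℚ)).mpr fun e => ?_
  refine tendsto_const_nhds.congr' ?_
  filter_upwards [h (e () + 1)] with i hi
  have := PowerSeries.X_pow_dvd_iff.mp hi (e ()) (Nat.lt_succ_self _)
  rw [map_sub, sub_eq_zero, PowerSeries.coeff_def rfl] at this
  exact this.symm

instance : T2Space (PowerSeries ℚ) := inferInstanceAs (T2Space ((Unit →₀ ℕ) → ℚ))

lemma hasSum_term : HasSum term total := by
  refine tendsto_of_dvd fun N => ?_
  filter_upwards [eventually_ge_atTop (box N)] with s hs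
  exact dvd_sum_term_sub_total hs

lemma constantCoeff_total : PowerSeries.constantCoeff total ≠ 0 := by
  intro h
  have := PowerSeries.X_pow_dvd_iff.mp (dvd_prod_factor_mul_total 1 4 (by norm_num)) 0 one_pos
  simp [h] at this

lemma dvd_mul_sub_one {z f g : PowerSeries ℚ} (hf : z ∣ f - 1) (hg : z ∣ g - 1) :
    z ∣ f * g - 1 := by
  convert dvd_add (hf.mul_left g) hg using 1
  ring

lemma hasProd_factor : HasProd factor total⁻¹ := by
  refine tendsto_of_dvd fun N => ?_
  filter_upwards [eventually_ge_atTop (Finset.range (2 * N + 2))] with s hs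
  have h₁ := dvd_prod_factor_mul_total N (2 * N + 2) le_rfl
  have h₂ : PowerSeries.X ^ N ∣ ∏ k ∈ s \ Finset.range (2 * N + 2), factor k - 1 := by
    refine Finset.prod_induction factor (fun f => PowerSeries.X ^ N ∣ f - 1)
      (fun f g hf hg => dvd_mul_sub_one hf hg) (by simp) fun k hk => ?_
    have hk' : N ≤ k := by
      rw [Finset.mem_sdiff, Finset.mem_range] at hk
      omega
    have hq : ∀ i, PowerSeries.X ^ N ∣ (1 - q ^ (8 * k + i)) ^ 2 - 1 := fun i => by
      have h : PowerSeries.X ^ N ∣ q ^ (8 * k + i) := pow_dvd_pow _ (by omega)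
      have h' : PowerSeries.X ^ N ∣ 1 - q ^ (8 * k + i) - 1 := by simpa using h
      rw [sq]
      exact dvd_mul_sub_one h' h'
    exact dvd_mul_sub_one (dvd_mul_sub_one (dvd_mul_sub_one (hq 1) (hq 3)) (hq 5)) (hq 7)
  have h₃ : total * total⁻¹ = 1 := PowerSeries.mul_inv_cancel _ constantCoeff_total
  rw [← Finset.prod_sdiff hs]
  generalize ∏ k ∈ s \ Finset.range (2 * N + 2), factor k = A at *
  generalize ∏ k ∈ Finset.range (2 * N + 2), factor k = B at *
  convert dvd_add (h₁.mul_left (A * total⁻¹)) (h₂.mul_left total⁻¹) using 1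
  linear_combination -A * B * h₃

end Conclusion

end A2Mod8

/-- Third new modulus-8 A₂ Rogers–Ramanujan identity (profile (3,1,1)). -/
theorem a2_mod8_profile311 :
    ∑' n : ℕ × ℕ × ℕ × ℕ,
      (fun n₁ n₂ n₃ n₄ : ℕ =>
        q ^ (n₁ ^ 2 + n₂ ^ 2 + n₃ ^ 2 + n₄ ^ 2 + (n₃) + n₂ * n₄ - n₁ * n₂)
          * (1) * (qPoch n₁)⁻¹ * qBinom n₁ n₂ * qBinom n₁ n₄ * qBinom n₂ n₃)
      n.1 n.2.1 n.2.2.1 n.2.2.2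
      = (∏' k : ℕ, ((1 - q ^ (8*k+1))^2 * (1 - q ^ (8*k+3))^2 * (1 - q ^ (8*k+5))^2 * (1 - q ^ (8*k+7))^2))⁻¹ := by
  change ∑' n, A2Mod8.term n = (∏' k, A2Mod8.factor k)⁻¹
  rw [A2Mod8.hasSum_term.tsum_eq, A2Mod8.hasProd_factor.tprod_eq]
  rw [PowerSeries.eq_inv_iff_mul_eq_one, PowerSeries.mul_inv_cancel _ A2Mod8.constantCoeff_total]
  simpa using A2Mod8.constantCoeff_total
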